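/- Skew-symmetrization of weak Lie 3-algebras is functorial up to homotopy: let f: (L,d,λ) → (L′,d′,λ′) and f′: (L′,d′,λ′) → (L″,d″,λ″) be weak morphisms of weak Lie 3-algebras over a commutative ring k in which 2 and 3 are invertible, and let f′∘f denote their composition. Then the skew-symmetrized components satisfy: (i) the first component of the skew-symmetrization of f′∘f equals f̄1′∘f̄1; (ii) the second component of the skew-symmetrization of f′∘f equals f̄2′∘(f̄1,f̄1) + f̄1′∘f̄2; and (iii) the third component of the skew-symmetrization of f′∘f minus (f̄3′∘(f̄1,f̄1,f̄1) − f̄2′∘(f̄2,f̄1) + f̄2′∘(f̄1,f̄2) − f̄2′∘(f̄1,f̄2)^{(12)} + f̄1′∘f̄3) equals ∂(−(1/24)·Σ_{σ∈S3} sgn(σ)·(f21′∘(f2,f1) + f21′∘(f1,f2))^σ), where ∂ is taken on maps L^⊗3 → L″. In particular, the defect of functoriality in the third component is a boundary. -/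

import Mathlib

namespace WL3

open Finset

/-! ## Graded multilinear maps -/

/-- Cast along an equality of degrees. -/
def gcast {M : ℤ → Type} {i j : ℤ} (h : i = j) (x : M i) : M j := h ▸ x

/-- A degree-`r`, arity-`m` map between ℤ-graded types, given by its components on
homogeneous tuples: its component at degrees `d` maps `L (d 1) ⊗ ⋯ ⊗ L (d m)` to
`M (r + d 1 + ⋯ + d m)`. -/
abbrev MMap (L M : ℤ → Type) (m : ℕ) (r : ℤ) : Type :=
  ∀ d : Fin m → ℤ, (∀ j, L (d j)) → M (r + ∑ j, d j)

variable {L M N : ℤ → Type}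

/-- Cast an `MMap` along equalities of arities and degrees. -/
def mcast {m m' : ℕ} {r r' : ℤ} (hm : m = m') (hr : r = r') (μ : MMap L M m r) :
    MMap L M m' r' := by subst hm; subst hr; exact μ

/-- Koszul sign of the permutation `σ` acting on a tuple of homogeneous elements of
degrees `d`: `∏_{i<j, σ i > σ j} (-1)^(d i · d j)`. -/
def koszulSign {m : ℕ} (d : Fin m → ℤ) (σ : Equiv.Perm (Fin m)) : ℤ :=
  ∏ p ∈ Finset.univ.filter (fun p : Fin m × Fin m => p.1 < p.2 ∧ σ p.2 < σ p.1),
    (-1 : ℤ) ^ (d p.1 * d p.2).natAbs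

/-- The action `μ ↦ μ^σ`, `μ^σ(x₁,…,x_m) = ε(σ;x)·μ(x_{σ⁻¹1},…,x_{σ⁻¹m})`. -/
def pa [∀ i, AddCommGroup (M i)] {m : ℕ} {r : ℤ} (σ : Equiv.Perm (Fin m)) (μ : MMap L M m r) :
    MMap L M m r := fun d x =>
  koszulSign d σ •
    gcast (by rw [Equiv.sum_comp σ.symm d])
      (μ (fun j => d (σ.symm j)) (fun j => x (σ.symm j)))

/-- Degrees of the outer map in a partial composition. -/
def outDeg (m₁ m₂ n : ℕ) (s : ℤ) (d : Fin (m₁ + n + m₂) → ℤ) : Fin (m₁ + 1 + m₂) → ℤ :=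
  Fin.append
    (Fin.append (fun j : Fin m₁ => d (Fin.castAdd m₂ (Fin.castAdd n j)))
      (fun _ : Fin 1 => s + ∑ j : Fin n, d (Fin.castAdd m₂ (Fin.natAdd m₁ j))))
    (fun j : Fin m₂ => d (Fin.natAdd (m₁ + n) j))

theorem outDeg_left (m₁ m₂ n : ℕ) (s : ℤ) (d : Fin (m₁ + n + m₂) → ℤ) (j : Fin m₁) :
    outDeg m₁ m₂ n s d (Fin.castAdd m₂ (Fin.castAdd 1 j))
      = d (Fin.castAdd m₂ (Fin.castAdd n j)) := by
  simp [outDeg, Fin.append_left]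

theorem outDeg_mid (m₁ m₂ n : ℕ) (s : ℤ) (d : Fin (m₁ + n + m₂) → ℤ) (j : Fin 1) :
    outDeg m₁ m₂ n s d (Fin.castAdd m₂ (Fin.natAdd m₁ j))
      = s + ∑ j : Fin n, d (Fin.castAdd m₂ (Fin.natAdd m₁ j)) := by
  simp [outDeg, Fin.append_left, Fin.append_right]

theorem outDeg_right (m₁ m₂ n : ℕ) (s : ℤ) (d : Fin (m₁ + n + m₂) → ℤ) (j : Fin m₂) :
    outDeg m₁ m₂ n s d (Fin.natAdd (m₁ + 1) j) = d (Fin.natAdd (m₁ + n) j) := by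
  simp [outDeg, Fin.append_right]

theorem outDeg_sum (m₁ m₂ n : ℕ) (r s : ℤ) (d : Fin (m₁ + n + m₂) → ℤ) :
    r + ∑ j, outDeg m₁ m₂ n s d j = (r + s) + ∑ j, d j := by
  simp [outDeg, Fin.sum_univ_add, Fin.append_left, Fin.append_right]
  ring

/-- Partial (operadic) composition `μ ∘_{m₁+1} ν` of `μ` (of arity `m₁ + 1 + m₂`) with `ν`
inserted in the slot `m₁ + 1`, with the Koszul sign `(-1)^(|ν|·(d 1 + ⋯ + d m₁))`. -/
def pcomp [∀ i, AddCommGroup (L i)] [∀ i, AddCommGroup (M i)] (m₁ m₂ : ℕ) {n : ℕ} {r s : ℤ}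
    (μ : MMap L M (m₁ + 1 + m₂) r) (ν : MMap L L n s) : MMap L M (m₁ + n + m₂) (r + s) :=
  fun d x =>
    ((-1 : ℤ) ^ (s * ∑ j : Fin m₁, d (Fin.castAdd m₂ (Fin.castAdd n j))).natAbs) •
    gcast (outDeg_sum m₁ m₂ n r s d)
      (μ (outDeg m₁ m₂ n s d)
        (fun j => Fin.addCases (motive := fun t => L (outDeg m₁ m₂ n s d t))
          (fun j' => Fin.addCases (motive := fun t => L (outDeg m₁ m₂ n s d (Fin.castAdd m₂ t)))
            (fun j1 => gcast (outDeg_left m₁ m₂ n s d j1).symm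
              (x (Fin.castAdd m₂ (Fin.castAdd n j1))))
            (fun j0 => gcast (outDeg_mid m₁ m₂ n s d j0).symm
              (ν (fun j2 => d (Fin.castAdd m₂ (Fin.natAdd m₁ j2)))
                 (fun j2 => x (Fin.castAdd m₂ (Fin.natAdd m₁ j2)))))
            j')
          (fun j3 => gcast (outDeg_right m₁ m₂ n s d j3).symm (x (Fin.natAdd (m₁ + n) j3)))
          j))

/-- Composition `μ ∘ g` of an arity-1 map with an arity-`a` map. -/
def comp₁ {a : ℕ} {r s : ℤ} (μ : MMap M N 1 r) (g : MMap L M a s) : MMap L N a (r + s) :=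
  fun d x =>
    gcast (by rw [Fin.sum_univ_one]; ring)
      (μ (fun _ : Fin 1 => s + ∑ j, d j) (fun _ => g d x))

theorem sum2 (a b : ℕ) (r s₁ s₂ : ℤ) (d : Fin (a + b) → ℤ) :
    r + ∑ t : Fin 2, ![s₁ + ∑ j : Fin a, d (Fin.castAdd b j),
                       s₂ + ∑ j : Fin b, d (Fin.natAdd a j)] t
      = (r + (s₁ + s₂)) + ∑ j, d j := by
  simp [Fin.sum_univ_two, Fin.sum_univ_add]
  ring

/-- Full composition `μ ∘ (g₁, g₂)` with Koszul signs. -/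
def comp₂ [∀ i, AddCommGroup (N i)] {a b : ℕ} {r s₁ s₂ : ℤ}
    (μ : MMap M N 2 r) (g₁ : MMap L M a s₁) (g₂ : MMap L M b s₂) :
    MMap L N (a + b) (r + (s₁ + s₂)) :=
  fun d x =>
    ((-1 : ℤ) ^ (s₂ * ∑ j : Fin a, d (Fin.castAdd b j)).natAbs) •
    gcast (sum2 a b r s₁ s₂ d)
      (μ ![s₁ + ∑ j : Fin a, d (Fin.castAdd b j), s₂ + ∑ j : Fin b, d (Fin.natAdd a j)]
        (Fin.cons (gcast (by simp) (g₁ (fun j => d (Fin.castAdd b j)) (fun j => x (Fin.castAdd b j))))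
          (fun _ : Fin 1 => gcast (by simp) (g₂ (fun j => d (Fin.natAdd a j)) (fun j => x (Fin.natAdd a j))))))

theorem sum3 (a b c : ℕ) (r s₁ s₂ s₃ : ℤ) (d : Fin (a + b + c) → ℤ) :
    r + ∑ t : Fin 3, ![s₁ + ∑ j : Fin a, d (Fin.castAdd c (Fin.castAdd b j)),
                       s₂ + ∑ j : Fin b, d (Fin.castAdd c (Fin.natAdd a j)),
                       s₃ + ∑ j : Fin c, d (Fin.natAdd (a + b) j)] t
      = (r + (s₁ + s₂ + s₃)) + ∑ j, d j := by
  simp [Fin.sum_univ_three, Fin.sum_univ_add]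
  ring

/-- Full composition `μ ∘ (g₁, g₂, g₃)` with Koszul signs. -/
def comp₃ [∀ i, AddCommGroup (N i)] {a b c : ℕ} {r s₁ s₂ s₃ : ℤ}
    (μ : MMap M N 3 r) (g₁ : MMap L M a s₁) (g₂ : MMap L M b s₂) (g₃ : MMap L M c s₃) :
    MMap L N (a + b + c) (r + (s₁ + s₂ + s₃)) :=
  fun d x =>
    ((-1 : ℤ) ^ (s₂ * (∑ j : Fin a, d (Fin.castAdd c (Fin.castAdd b j)))
        + s₃ * ((∑ j : Fin a, d (Fin.castAdd c (Fin.castAdd b j)))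
          + ∑ j : Fin b, d (Fin.castAdd c (Fin.natAdd a j)))).natAbs) •
    gcast (sum3 a b c r s₁ s₂ s₃ d)
      (μ ![s₁ + ∑ j : Fin a, d (Fin.castAdd c (Fin.castAdd b j)),
           s₂ + ∑ j : Fin b, d (Fin.castAdd c (Fin.natAdd a j)),
           s₃ + ∑ j : Fin c, d (Fin.natAdd (a + b) j)]
        (Fin.cons (gcast (by simp)
            (g₁ (fun j => d (Fin.castAdd c (Fin.castAdd b j)))
                (fun j => x (Fin.castAdd c (Fin.castAdd b j)))))
          (Fin.cons (gcast (by simp)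
              (g₂ (fun j => d (Fin.castAdd c (Fin.natAdd a j)))
                  (fun j => x (Fin.castAdd c (Fin.natAdd a j)))))
            (fun _ : Fin 1 => gcast (by simp)
              (g₃ (fun j => d (Fin.natAdd (a + b) j))
                  (fun j => x (Fin.natAdd (a + b) j)))))))

theorem sum4 (a b c e : ℕ) (r s₁ s₂ s₃ s₄ : ℤ) (d : Fin (a + b + c + e) → ℤ) :
    r + ∑ t : Fin 4, ![s₁ + ∑ j : Fin a, d (Fin.castAdd e (Fin.castAdd c (Fin.castAdd b j))),
                       s₂ + ∑ j : Fin b, d (Fin.castAdd e (Fin.castAdd c (Fin.natAdd a j))),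
                       s₃ + ∑ j : Fin c, d (Fin.castAdd e (Fin.natAdd (a + b) j)),
                       s₄ + ∑ j : Fin e, d (Fin.natAdd (a + b + c) j)] t
      = (r + (s₁ + s₂ + s₃ + s₄)) + ∑ j, d j := by
  simp [Fin.sum_univ_four, Fin.sum_univ_add]
  ring

/-- Full composition `μ ∘ (g₁, g₂, g₃, g₄)` with Koszul signs. -/
def comp₄ [∀ i, AddCommGroup (N i)] {a b c e : ℕ} {r s₁ s₂ s₃ s₄ : ℤ}
    (μ : MMap M N 4 r) (g₁ : MMap L M a s₁) (g₂ : MMap L M b s₂) (g₃ : MMap L M c s₃)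
    (g₄ : MMap L M e s₄) :
    MMap L N (a + b + c + e) (r + (s₁ + s₂ + s₃ + s₄)) :=
  fun d x =>
    ((-1 : ℤ) ^ (s₂ * (∑ j : Fin a, d (Fin.castAdd e (Fin.castAdd c (Fin.castAdd b j))))
        + s₃ * ((∑ j : Fin a, d (Fin.castAdd e (Fin.castAdd c (Fin.castAdd b j))))
          + ∑ j : Fin b, d (Fin.castAdd e (Fin.castAdd c (Fin.natAdd a j))))
        + s₄ * ((∑ j : Fin a, d (Fin.castAdd e (Fin.castAdd c (Fin.castAdd b j))))
          + (∑ j : Fin b, d (Fin.castAdd e (Fin.castAdd c (Fin.natAdd a j))))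
          + ∑ j : Fin c, d (Fin.castAdd e (Fin.natAdd (a + b) j)))).natAbs) •
    gcast (sum4 a b c e r s₁ s₂ s₃ s₄ d)
      (μ ![s₁ + ∑ j : Fin a, d (Fin.castAdd e (Fin.castAdd c (Fin.castAdd b j))),
           s₂ + ∑ j : Fin b, d (Fin.castAdd e (Fin.castAdd c (Fin.natAdd a j))),
           s₃ + ∑ j : Fin c, d (Fin.castAdd e (Fin.natAdd (a + b) j)),
           s₄ + ∑ j : Fin e, d (Fin.natAdd (a + b + c) j)]
        (Fin.cons (gcast (by simp)
            (g₁ (fun j => d (Fin.castAdd e (Fin.castAdd c (Fin.castAdd b j))))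
                (fun j => x (Fin.castAdd e (Fin.castAdd c (Fin.castAdd b j))))))
          (Fin.cons (gcast (by simp)
              (g₂ (fun j => d (Fin.castAdd e (Fin.castAdd c (Fin.natAdd a j))))
                  (fun j => x (Fin.castAdd e (Fin.castAdd c (Fin.natAdd a j))))))
            (Fin.cons (gcast (by simp)
                (g₃ (fun j => d (Fin.castAdd e (Fin.natAdd (a + b) j)))
                    (fun j => x (Fin.castAdd e (Fin.natAdd (a + b) j)))))
              (fun _ : Fin 1 => gcast (by simp)
                (g₄ (fun j => d (Fin.natAdd (a + b + c) j))
                    (fun j => x (Fin.natAdd (a + b + c) j))))))))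

/-- The differential `∂(μ) = D' ∘ μ - (-1)^{|μ|} ∑ᵢ μ ∘ᵢ D`. -/
def bdry [∀ i, AddCommGroup (L i)] [∀ i, AddCommGroup (M i)] {m : ℕ} {r : ℤ}
    (D' : MMap M M 1 (-1)) (D : MMap L L 1 (-1)) (μ : MMap L M m r) : MMap L M m (-1 + r) :=
  comp₁ D' μ - ((-1 : ℤ) ^ r.natAbs) •
    ∑ p : Fin m, mcast (by have := p.isLt; omega) (by ring)
      (pcomp p.val (m - 1 - p.val) (mcast (by have := p.isLt; omega) rfl μ) D)

/-- The identity, as an `MMap`. -/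
def idm : MMap L L 1 0 := fun d x => gcast (by rw [Fin.sum_univ_one, zero_add]) (x 0)

/-- `μ ∘_{m₁+1} ν`, recast to a specified target degree `R`. -/
def pc [∀ i, AddCommGroup (L i)] [∀ i, AddCommGroup (M i)] (R : ℤ) (m₁ m₂ : ℕ) {n : ℕ}
    {r s : ℤ} (μ : MMap L M (m₁ + 1 + m₂) r) (ν : MMap L L n s)
    (h : r + s = R := by norm_num) : MMap L M (m₁ + n + m₂) R :=
  mcast rfl h (pcomp m₁ m₂ μ ν)

/-- `μ ∘ g`, recast to a specified target degree `R`. -/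
def fc1 (R : ℤ) {a : ℕ} {r s : ℤ} (μ : MMap M N 1 r) (g : MMap L M a s)
    (h : r + s = R := by norm_num) : MMap L N a R :=
  mcast rfl h (comp₁ μ g)

/-- `μ ∘ (g₁, g₂)`, recast to a specified target degree `R`. -/
def fc2 [∀ i, AddCommGroup (N i)] (R : ℤ) {a b : ℕ} {r s₁ s₂ : ℤ}
    (μ : MMap M N 2 r) (g₁ : MMap L M a s₁) (g₂ : MMap L M b s₂)
    (h : r + (s₁ + s₂) = R := by norm_num) : MMap L N (a + b) R :=
  mcast rfl h (comp₂ μ g₁ g₂)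

/-- `μ ∘ (g₁, g₂, g₃)`, recast to a specified target degree `R`. -/
def fc3 [∀ i, AddCommGroup (N i)] (R : ℤ) {a b c : ℕ} {r s₁ s₂ s₃ : ℤ}
    (μ : MMap M N 3 r) (g₁ : MMap L M a s₁) (g₂ : MMap L M b s₂) (g₃ : MMap L M c s₃)
    (h : r + (s₁ + s₂ + s₃) = R := by norm_num) : MMap L N (a + b + c) R :=
  mcast rfl h (comp₃ μ g₁ g₂ g₃)

/-- `μ ∘ (g₁, g₂, g₃, g₄)`, recast to a specified target degree `R`. -/
def fc4 [∀ i, AddCommGroup (N i)] (R : ℤ) {a b c e : ℕ} {r s₁ s₂ s₃ s₄ : ℤ}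
    (μ : MMap M N 4 r) (g₁ : MMap L M a s₁) (g₂ : MMap L M b s₂) (g₃ : MMap L M c s₃)
    (g₄ : MMap L M e s₄) (h : r + (s₁ + s₂ + s₃ + s₄) = R := by norm_num) :
    MMap L N (a + b + c + e) R :=
  mcast rfl h (comp₄ μ g₁ g₂ g₃ g₄)

/-- `∂(μ)`, recast to a specified target degree `R`. -/
def bd [∀ i, AddCommGroup (L i)] [∀ i, AddCommGroup (M i)] (R : ℤ) {m : ℕ} {r : ℤ}
    (D' : MMap M M 1 (-1)) (D : MMap L L 1 (-1)) (μ : MMap L M m r)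
    (h : -1 + r = R := by norm_num) : MMap L M m R :=
  mcast rfl h (bdry D' D μ)

/-- Multilinearity over `k` of the components of an `MMap`. -/
def IsMultilinear (k : Type) [CommRing k] {L M : ℤ → Type} [∀ i, AddCommGroup (L i)]
    [∀ i, AddCommGroup (M i)] [∀ i, Module k (L i)] [∀ i, Module k (M i)] {m : ℕ} {r : ℤ}
    (μ : MMap L M m r) : Prop :=
  ∀ (d : Fin m → ℤ) (x : ∀ j, L (d j)) (j : Fin m),
    (∀ a b : L (d j), μ d (Function.update x j (a + b))
        = μ d (Function.update x j a) + μ d (Function.update x j b)) ∧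
    (∀ (c : k) (a : L (d j)), μ d (Function.update x j (c • a)) = c • μ d (Function.update x j a))

/-! ## Permutations (0-indexed; a cycle `(a b c)` is `swap a b * swap b c`) -/

def P12 (m : ℕ) [NeZero m] : Equiv.Perm (Fin m) := Equiv.swap 0 1
def P13 (m : ℕ) [NeZero m] : Equiv.Perm (Fin m) := Equiv.swap 0 2
def P23 (m : ℕ) [NeZero m] : Equiv.Perm (Fin m) := Equiv.swap 1 2
def P34 (m : ℕ) [NeZero m] : Equiv.Perm (Fin m) := Equiv.swap 2 3
def P123 (m : ℕ) [NeZero m] : Equiv.Perm (Fin m) := Equiv.swap 0 1 * Equiv.swap 1 2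
def P132 (m : ℕ) [NeZero m] : Equiv.Perm (Fin m) := Equiv.swap 0 2 * Equiv.swap 2 1
def P234 (m : ℕ) [NeZero m] : Equiv.Perm (Fin m) := Equiv.swap 1 2 * Equiv.swap 2 3
def P243 (m : ℕ) [NeZero m] : Equiv.Perm (Fin m) := Equiv.swap 1 3 * Equiv.swap 3 2
def P1234 (m : ℕ) [NeZero m] : Equiv.Perm (Fin m) :=
  Equiv.swap 0 1 * Equiv.swap 1 2 * Equiv.swap 2 3
def P1432 (m : ℕ) [NeZero m] : Equiv.Perm (Fin m) :=
  Equiv.swap 0 3 * Equiv.swap 3 2 * Equiv.swap 2 1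
def P1342 (m : ℕ) [NeZero m] : Equiv.Perm (Fin m) :=
  Equiv.swap 0 2 * Equiv.swap 2 3 * Equiv.swap 3 1
def P13P24 (m : ℕ) [NeZero m] : Equiv.Perm (Fin m) := Equiv.swap 0 2 * Equiv.swap 1 3

end WL3
namespace WL3

open Finset

variable (k : Type) [CommRing k]

/-- A Leibniz 3-algebra structure: maps `l2, l3, l4` on a complex with differential `D`
satisfying the generalized Jacobi identities (L1)–(L4). -/
structure IsLeibniz3 {L : ℤ → Type} [∀ i, AddCommGroup (L i)] [∀ i, Module k (L i)]
    (D : MMap L L 1 (-1)) (l2 : MMap L L 2 0) (l3 : MMap L L 3 1) (l4 : MMap L L 4 2) :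
    Prop where
  lin2 : IsMultilinear k l2
  lin3 : IsMultilinear k l3
  lin4 : IsMultilinear k l4
  eqL1 : bd (-1) D D l2 = 0
  eqL2 : bd 0 D D l3 =
    pc 0 1 0 l2 l2 - pc 0 0 1 l2 l2 - pa (P12 3) (pc 0 1 0 l2 l2)
  eqL3 : bd 1 D D l4 =
    pc 1 0 1 l2 l3 + pc 1 1 0 l2 l3 - pa (P12 4) (pc 1 1 0 l2 l3)
      + pa (P123 4) (pc 1 1 0 l2 l3) - pc 1 0 2 l3 l2
      + pc 1 1 1 l3 l2 - pa (P12 4) (pc 1 1 1 l3 l2)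
      - pc 1 2 0 l3 l2 + pa (P23 4) (pc 1 2 0 l3 l2) - pa (P132 4) (pc 1 2 0 l3 l2)
  eqL4 : (0 : MMap L L 5 2) =
    pc 2 0 1 l2 l4 - pc 2 1 0 l2 l4 + pa (P12 5) (pc 2 1 0 l2 l4)
      - pa (P123 5) (pc 2 1 0 l2 l4) + pa (P1234 5) (pc 2 1 0 l2 l4)
      + pc 2 0 2 l3 l3 + pc 2 1 1 l3 l3 - pa (P12 5) (pc 2 1 1 l3 l3)
      + pa (P123 5) (pc 2 1 1 l3 l3) + pc 2 2 0 l3 l3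
      - pa (P23 5) (pc 2 2 0 l3 l3) + pa (P132 5) (pc 2 2 0 l3 l3)
      + pa (P234 5) (pc 2 2 0 l3 l3) - pa (P1342 5) (pc 2 2 0 l3 l3)
      + pa (P13P24 5) (pc 2 2 0 l3 l3)
      + pc 2 0 3 l4 l2 - pc 2 1 2 l4 l2 + pa (P12 5) (pc 2 1 2 l4 l2)
      + pc 2 2 1 l4 l2 - pa (P23 5) (pc 2 2 1 l4 l2) + pa (P132 5) (pc 2 2 1 l4 l2)
      - pc 2 3 0 l4 l2 + pa (P34 5) (pc 2 3 0 l4 l2) - pa (P243 5) (pc 2 3 0 l4 l2)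
      + pa (P1432 5) (pc 2 3 0 l4 l2)

/-- A weak Lie 3-algebra: a 3-term chain complex equipped with structure maps
`l2, l3, l4, l21, l211, l31, l32` satisfying (L1)–(L4) and (W1)–(W11). -/
structure WeakLie3 (L : ℤ → Type) [∀ i, AddCommGroup (L i)] [∀ i, Module k (L i)] where
  D : MMap L L 1 (-1)
  linD : IsMultilinear k D
  dd : fc1 (-2) D D = 0
  bound : ∀ i : ℤ, (i < 0 ∨ 2 < i) → ∀ x : L i, x = 0
  l2 : MMap L L 2 0
  l3 : MMap L L 3 1
  l4 : MMap L L 4 2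
  l21 : MMap L L 2 1
  l211 : MMap L L 2 2
  l31 : MMap L L 3 2
  l32 : MMap L L 3 2
  leib : IsLeibniz3 k D l2 l3 l4
  lin21 : IsMultilinear k l21
  lin211 : IsMultilinear k l211
  lin31 : IsMultilinear k l31
  lin32 : IsMultilinear k l32
  w1 : bd 0 D D l21 = l2 + pa (P12 2) l2
  w2 : bd 1 D D l211 = l21 - pa (P12 2) l21
  w3 : bd 1 D D l31 = l3 + pa (P12 3) l3 + pc 1 0 1 l2 l21
  w4 : bd 1 D D l32 = l3 + pa (P23 3) l3 - pc 1 1 0 l2 l21 + pc 1 0 1 l21 l2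
        + pa (P12 3) (pc 1 1 0 l21 l2)
  w5 : l211 + pa (P12 2) l211 = 0
  w6 : l31 - pa (P12 3) l31 = pc 2 0 1 l2 l211
  w7 : l31 - pa (P12 3) l32 + pa (P132 3) l31 - l32 + pa (P23 3) l31 - pa (P123 3) l32
        = pc 2 1 0 l21 l21 + pc 2 0 1 l21 l21 + pa (P12 3) (pc 2 1 0 l21 l21)
          + pa (P132 3) (pc 2 1 0 l211 l2)
  w8 : l32 - pa (P23 3) l32 = - pc 2 1 0 l2 l211 + pc 2 0 1 l211 l2
        + pa (P12 3) (pc 2 1 0 l211 l2)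
  w9 : l4 + pa (P12 4) l4 = pc 2 0 1 l2 l31 - pc 2 2 0 l31 l2
        + pa (P123 4) (pc 2 1 0 l2 l31) + pc 2 0 2 l3 l21
  w10 : l4 + pa (P23 4) l4 = pc 2 0 1 l2 l32 - pc 2 1 1 l3 l21 + pc 2 1 0 l2 l31
        - pc 2 0 2 l31 l2 - pa (P12 4) (pc 2 1 1 l31 l2) - pa (P132 4) (pc 2 2 0 l31 l2)
  w11 : l4 + pa (P34 4) l4 = pc 2 0 1 l21 l3 - pc 2 0 2 l32 l2 + pc 2 1 1 l32 l2
        - pa (P12 4) (pc 2 1 1 l32 l2) + pc 2 2 0 l3 l21 + pa (P23 4) (pc 2 2 0 l32 l2)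
        - pa (P132 4) (pc 2 2 0 l32 l2) + pc 2 1 0 l2 l32 - pa (P12 4) (pc 2 1 0 l2 l32)
        + pa (P123 4) (pc 2 1 0 l21 l3)

end WL3
namespace WL3

open Finset

variable (k : Type) [CommRing k]

/-- A weak morphism of weak Lie 3-algebras `(f1,f2,f21,f3) : A → B`, i.e. a solution of
equations (M1)–(M8). -/
structure IsWeakMorphism {L M : ℤ → Type} [∀ i, AddCommGroup (L i)] [∀ i, Module k (L i)]
    [∀ i, AddCommGroup (M i)] [∀ i, Module k (M i)]
    (A : WeakLie3 k L) (B : WeakLie3 k M)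
    (f1 : MMap L M 1 0) (f2 : MMap L M 2 1) (f21 : MMap L M 2 2) (f3 : MMap L M 3 2) :
    Prop where
  lin1 : IsMultilinear k f1
  lin2 : IsMultilinear k f2
  lin21 : IsMultilinear k f21
  lin3 : IsMultilinear k f3
  m1 : bd (-1) B.D A.D f1 = 0
  m2 : bd 0 B.D A.D f2 = fc1 0 f1 A.l2 - fc2 0 B.l2 f1 f1
  m3 : bd 1 B.D A.D f3 = fc1 1 f1 A.l3 - pc 1 1 0 f2 A.l2 + pc 1 0 1 f2 A.l2
        + pa (P12 3) (pc 1 1 0 f2 A.l2) - fc3 1 B.l3 f1 f1 f1 - fc2 1 B.l2 f1 f2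
        + fc2 1 B.l2 f2 f1 + pa (P12 3) (fc2 1 B.l2 f1 f2)
  m4 : fc1 2 f1 A.l4 - fc4 2 B.l4 f1 f1 f1 f1 =
        pc 2 0 1 f2 A.l3 + pc 2 1 0 f2 A.l3 - pa (P12 4) (pc 2 1 0 f2 A.l3)
        + pa (P123 4) (pc 2 1 0 f2 A.l3) - pc 2 0 2 f3 A.l2 + pc 2 1 1 f3 A.l2
        - pa (P12 4) (pc 2 1 1 f3 A.l2) - pc 2 2 0 f3 A.l2 + pa (P23 4) (pc 2 2 0 f3 A.l2)
        - pa (P132 4) (pc 2 2 0 f3 A.l2) + fc2 2 B.l2 f3 f1 + fc2 2 B.l2 f1 f3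
        - pa (P12 4) (fc2 2 B.l2 f1 f3) + pa (P123 4) (fc2 2 B.l2 f1 f3)
        - fc2 2 B.l2 f2 f2 + pa (P23 4) (fc2 2 B.l2 f2 f2) - pa (P132 4) (fc2 2 B.l2 f2 f2)
        + fc3 2 B.l3 f2 f1 f1 - fc3 2 B.l3 f1 f2 f1 + pa (P12 4) (fc3 2 B.l3 f1 f2 f1)
        + fc3 2 B.l3 f1 f1 f2 - pa (P23 4) (fc3 2 B.l3 f1 f1 f2)
        + pa (P132 4) (fc3 2 B.l3 f1 f1 f2)
  m5 : bd 1 B.D A.D f21 = - f2 - pa (P12 2) f2 + fc1 1 f1 A.l21 - fc2 1 B.l21 f1 f1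
  m6 : fc1 2 f1 A.l211 - fc2 2 B.l211 f1 f1 = f21 - pa (P12 2) f21
  m7 : fc1 2 f1 A.l31 - fc3 2 B.l31 f1 f1 f1 =
        f3 + pa (P12 3) f3 + pc 2 0 1 f2 A.l21 + fc2 2 B.l2 f21 f1
  m8 : fc1 2 f1 A.l32 - fc3 2 B.l32 f1 f1 f1 =
        f3 + pa (P23 3) f3 - pc 2 1 0 f2 A.l21 + pc 2 0 1 f21 A.l2
        + pa (P12 3) (pc 2 1 0 f21 A.l2) - fc2 2 B.l2 f1 f21 - fc2 2 B.l21 f2 f1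
        - pa (P12 3) (fc2 2 B.l21 f1 f2)

/-- A morphism of (semi-strict) Lie 3-algebras / Leibniz 3-algebras: equations (M1)–(M4)
for structure maps `(a2,a3,a4)` on the source and `(b2,b3,b4)` on the target. -/
structure IsLeibMorphism {L M : ℤ → Type} [∀ i, AddCommGroup (L i)] [∀ i, Module k (L i)]
    [∀ i, AddCommGroup (M i)] [∀ i, Module k (M i)]
    (DL : MMap L L 1 (-1)) (DM : MMap M M 1 (-1))
    (a2 : MMap L L 2 0) (a3 : MMap L L 3 1) (a4 : MMap L L 4 2)
    (b2 : MMap M M 2 0) (b3 : MMap M M 3 1) (b4 : MMap M M 4 2)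
    (f1 : MMap L M 1 0) (f2 : MMap L M 2 1) (f3 : MMap L M 3 2) : Prop where
  lin1 : IsMultilinear k f1
  lin2 : IsMultilinear k f2
  lin3 : IsMultilinear k f3
  m1 : bd (-1) DM DL f1 = 0
  m2 : bd 0 DM DL f2 = fc1 0 f1 a2 - fc2 0 b2 f1 f1
  m3 : bd 1 DM DL f3 = fc1 1 f1 a3 - pc 1 1 0 f2 a2 + pc 1 0 1 f2 a2
        + pa (P12 3) (pc 1 1 0 f2 a2) - fc3 1 b3 f1 f1 f1 - fc2 1 b2 f1 f2
        + fc2 1 b2 f2 f1 + pa (P12 3) (fc2 1 b2 f1 f2)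
  m4 : fc1 2 f1 a4 - fc4 2 b4 f1 f1 f1 f1 =
        pc 2 0 1 f2 a3 + pc 2 1 0 f2 a3 - pa (P12 4) (pc 2 1 0 f2 a3)
        + pa (P123 4) (pc 2 1 0 f2 a3) - pc 2 0 2 f3 a2 + pc 2 1 1 f3 a2
        - pa (P12 4) (pc 2 1 1 f3 a2) - pc 2 2 0 f3 a2 + pa (P23 4) (pc 2 2 0 f3 a2)
        - pa (P132 4) (pc 2 2 0 f3 a2) + fc2 2 b2 f3 f1 + fc2 2 b2 f1 f3
        - pa (P12 4) (fc2 2 b2 f1 f3) + pa (P123 4) (fc2 2 b2 f1 f3)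
        - fc2 2 b2 f2 f2 + pa (P23 4) (fc2 2 b2 f2 f2) - pa (P132 4) (fc2 2 b2 f2 f2)
        + fc3 2 b3 f2 f1 f1 - fc3 2 b3 f1 f2 f1 + pa (P12 4) (fc3 2 b3 f1 f2 f1)
        + fc3 2 b3 f1 f1 f2 - pa (P23 4) (fc3 2 b3 f1 f1 f2)
        + pa (P132 4) (fc3 2 b3 f1 f1 f2)

/-- A deformation retract `(p, i, h)` of `(L, D)` onto `(L', D')`:
`p`, `i` are chain maps, `id - i∘p = D∘h + h∘D` and `p∘i = id`. -/
structure IsDefRetract {L L' : ℤ → Type} [∀ i, AddCommGroup (L i)] [∀ i, Module k (L i)]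
    [∀ i, AddCommGroup (L' i)] [∀ i, Module k (L' i)]
    (D : MMap L L 1 (-1)) (D' : MMap L' L' 1 (-1))
    (p : MMap L L' 1 0) (i : MMap L' L 1 0) (h : MMap L L 1 1) : Prop where
  linp : IsMultilinear k p
  lini : IsMultilinear k i
  linh : IsMultilinear k h
  chainp : bd (-1) D' D p = 0
  chaini : bd (-1) D D' i = 0
  homotopy : idm - fc1 0 i p = fc1 0 D h + fc1 0 h D
  retract : fc1 0 p i = idm

/-- A weak Lie 2-algebra in the sense of Roytenberg (a 2-term truncation of a weak
Lie 3-algebra). -/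
structure WeakLie2 (L : ℤ → Type) [∀ i, AddCommGroup (L i)] [∀ i, Module k (L i)] where
  D : MMap L L 1 (-1)
  linD : IsMultilinear k D
  dd : fc1 (-2) D D = 0
  bound : ∀ i : ℤ, (i < 0 ∨ 1 < i) → ∀ x : L i, x = 0
  l2 : MMap L L 2 0
  l3 : MMap L L 3 1
  l21 : MMap L L 2 1
  lin2 : IsMultilinear k l2
  lin3 : IsMultilinear k l3
  lin21 : IsMultilinear k l21
  e1 : bd (-1) D D l2 = 0
  e2 : bd 0 D D l3 = pc 0 1 0 l2 l2 - pc 0 0 1 l2 l2 - pa (P12 3) (pc 0 1 0 l2 l2)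
  e3 : (0 : MMap L L 4 1) =
    pc 1 0 1 l2 l3 + pc 1 1 0 l2 l3 - pa (P12 4) (pc 1 1 0 l2 l3)
      + pa (P123 4) (pc 1 1 0 l2 l3) - pc 1 0 2 l3 l2
      + pc 1 1 1 l3 l2 - pa (P12 4) (pc 1 1 1 l3 l2)
      - pc 1 2 0 l3 l2 + pa (P23 4) (pc 1 2 0 l3 l2) - pa (P132 4) (pc 1 2 0 l3 l2)
  e4 : bd 0 D D l21 = l2 + pa (P12 2) l2
  e5 : (0 : MMap L L 2 1) = l21 - pa (P12 2) l21
  e6 : (0 : MMap L L 3 1) = l3 + pa (P12 3) l3 + pc 1 0 1 l2 l21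
  e7 : (0 : MMap L L 3 1) = l3 + pa (P23 3) l3 - pc 1 1 0 l2 l21 + pc 1 0 1 l21 l2
        + pa (P12 3) (pc 1 1 0 l21 l2)

end WL3
namespace WL3

open Finset

section Transfer

variable {k : Type} [CommRing k] {L L' : ℤ → Type}
  [∀ i, AddCommGroup (L i)] [∀ i, Module k (L i)]
  [∀ i, AddCommGroup (L' i)] [∀ i, Module k (L' i)]
variable (A : WeakLie3 k L) (p : MMap L L' 1 0) (i : MMap L' L 1 0) (h : MMap L L 1 1)

/-- `h ∘ λ2` -/
def hl2 : MMap L L 2 1 := fc1 1 h A.l2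
/-- `h ∘ λ3` -/
def hl3 : MMap L L 3 2 := fc1 2 h A.l3
/-- `h ∘ λ21` -/
def hl21 : MMap L L 2 2 := fc1 2 h A.l21

/-- Transferred `λ2' = p ∘ λ2 ∘ (i,i)`. -/
def tl2 : MMap L' L' 2 0 := fc1 0 p (fc2 0 A.l2 i i)

/-- Transferred `λ3'`. -/
def tl3 : MMap L' L' 3 1 :=
  fc1 1 p (fc3 1 A.l3 i i i)
  + fc1 1 p (fc3 1 (pc 1 0 1 A.l2 (hl2 A h)
      - (pc 1 1 0 A.l2 (hl2 A h) - pa (P12 3) (pc 1 1 0 A.l2 (hl2 A h)))) i i i)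

/-- Transferred `λ4'`. -/
def tl4 : MMap L' L' 4 2 :=
  fc1 2 p (fc4 2 A.l4 i i i i)
  - fc1 2 p (fc4 2
      (pc 2 0 1 A.l2 (hl3 A h)
        + (pc 2 1 0 A.l2 (hl3 A h) - pa (P12 4) (pc 2 1 0 A.l2 (hl3 A h))
            + pa (P123 4) (pc 2 1 0 A.l2 (hl3 A h)))
        + pc 2 0 2 A.l3 (hl2 A h)
        - (pc 2 1 1 A.l3 (hl2 A h) - pa (P12 4) (pc 2 1 1 A.l3 (hl2 A h)))
        + (pc 2 2 0 A.l3 (hl2 A h) - pa (P23 4) (pc 2 2 0 A.l3 (hl2 A h))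
            + pa (P132 4) (pc 2 2 0 A.l3 (hl2 A h)))) i i i i)
  - fc1 2 p (fc4 2
      (pc 2 0 2 (pc 1 0 1 A.l2 (hl2 A h)) (hl2 A h)
        - (pc 2 1 1 (pc 1 0 1 A.l2 (hl2 A h)) (hl2 A h)
            - pa (P12 4) (pc 2 1 1 (pc 1 0 1 A.l2 (hl2 A h)) (hl2 A h)))
        + (fc2 2 A.l2 (hl2 A h) (hl2 A h) - pa (P23 4) (fc2 2 A.l2 (hl2 A h) (hl2 A h))
            + pa (P132 4) (fc2 2 A.l2 (hl2 A h) (hl2 A h)))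
        + (pc 2 1 1 (pc 1 1 0 A.l2 (hl2 A h)) (hl2 A h)
            - pa (P12 4) (pc 2 1 1 (pc 1 1 0 A.l2 (hl2 A h)) (hl2 A h))
            + pa (P123 4) (pc 2 1 1 (pc 1 1 0 A.l2 (hl2 A h)) (hl2 A h)))
        - (pc 2 2 0 (pc 1 1 0 A.l2 (hl2 A h)) (hl2 A h)
            - pa (P12 4) (pc 2 2 0 (pc 1 1 0 A.l2 (hl2 A h)) (hl2 A h))
            + pa (P123 4) (pc 2 2 0 (pc 1 1 0 A.l2 (hl2 A h)) (hl2 A h))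
            - pa (P23 4) (pc 2 2 0 (pc 1 1 0 A.l2 (hl2 A h)) (hl2 A h))
            + pa (P132 4) (pc 2 2 0 (pc 1 1 0 A.l2 (hl2 A h)) (hl2 A h))
            - pa (P13 4) (pc 2 2 0 (pc 1 1 0 A.l2 (hl2 A h)) (hl2 A h)))) i i i i)

/-- Transferred `λ21' = p ∘ λ21 ∘ (i,i)`. -/
def tl21 : MMap L' L' 2 1 := fc1 1 p (fc2 1 A.l21 i i)

/-- Transferred `λ211' = p ∘ λ211 ∘ (i,i)`. -/
def tl211 : MMap L' L' 2 2 := fc1 2 p (fc2 2 A.l211 i i)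

/-- Transferred `λ31'`. -/
def tl31 : MMap L' L' 3 2 :=
  fc1 2 p (fc3 2 A.l31 i i i) - fc1 2 p (fc3 2 (pc 2 0 1 A.l2 (hl21 A h)) i i i)

/-- Transferred `λ32'`. -/
def tl32 : MMap L' L' 3 2 :=
  fc1 2 p (fc3 2 A.l32 i i i)
  + fc1 2 p (fc3 2 (pc 2 0 1 A.l21 (hl2 A h) + pc 2 1 0 A.l2 (hl21 A h)
      + pa (P12 3) (pc 2 1 0 A.l21 (hl2 A h))) i i i)

/-- Extension of `i`: `i₂ = -h ∘ λ2 ∘ (i,i)`. -/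
def ti2 : MMap L' L 2 1 := - fc1 1 h (fc2 0 A.l2 i i)

/-- Extension of `i`: `i₂₁ = -h ∘ λ21 ∘ (i,i)`. -/
def ti21 : MMap L' L 2 2 := - fc1 2 h (fc2 1 A.l21 i i)

/-- Extension of `i`: `i₃`. -/
def ti3 : MMap L' L 3 2 :=
  - fc1 2 h (fc3 1 A.l3 i i i)
  - fc1 2 h (fc3 1 (pc 1 0 1 A.l2 (hl2 A h)
      - (pc 1 1 0 A.l2 (hl2 A h) - pa (P12 3) (pc 1 1 0 A.l2 (hl2 A h)))) i i i)

end Transfer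

section Skew

variable (k : Type) [CommRing k] [Invertible (2 : k)] [Invertible (3 : k)]
variable {L M : ℤ → Type} [∀ i, AddCommGroup (L i)] [∀ i, Module k (L i)]
  [∀ i, AddCommGroup (M i)] [∀ i, Module k (M i)]

/-- Skew-symmetrization `λ̄2` of a weak Lie 3-algebra. -/
def skew2 (A : WeakLie3 k L) : MMap L L 2 0 :=
  (⅟ (2 : k)) • ∑ σ : Equiv.Perm (Fin 2), (Equiv.Perm.sign σ : ℤ) • pa σ A.l2

/-- Skew-symmetrization `λ̄3` of a weak Lie 3-algebra. -/
def skew3 (A : WeakLie3 k L) : MMap L L 3 1 :=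
  (⅟ (2 : k) * ⅟ (3 : k)) • ∑ σ : Equiv.Perm (Fin 3), (Equiv.Perm.sign σ : ℤ) • pa σ A.l3
  - (⅟ (2 : k) * ⅟ (2 : k) * ⅟ (2 : k) * ⅟ (3 : k)) •
      ∑ σ : Equiv.Perm (Fin 3), (Equiv.Perm.sign σ : ℤ) •
        pa σ (pc 1 0 1 A.l21 A.l2 + pc 1 1 0 A.l21 A.l2)

/-- Skew-symmetrization `λ̄4` of a weak Lie 3-algebra. -/
def skew4 (A : WeakLie3 k L) : MMap L L 4 2 :=
  (⅟ (2 : k) * ⅟ (2 : k) * ⅟ (2 : k) * ⅟ (3 : k)) •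
      ∑ σ : Equiv.Perm (Fin 4), (Equiv.Perm.sign σ : ℤ) • pa σ A.l4
  + (⅟ (2 : k) * ⅟ (2 : k) * ⅟ (2 : k) * ⅟ (2 : k) * ⅟ (3 : k)) •
      ∑ σ : Equiv.Perm (Fin 4), (Equiv.Perm.sign σ : ℤ) •
        pa σ (pc 2 0 1 A.l21 A.l3 - pc 2 0 2 A.l31 A.l2 + pc 2 1 1 A.l32 A.l2
          - pc 2 1 0 A.l21 A.l3 - pc 2 1 1 A.l31 A.l2 + pc 2 2 0 A.l32 A.l2)

/-- Skew-symmetrization `f̄2` of the second component of a weak morphism. -/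
def skewMor2 (f2 : MMap L M 2 1) : MMap L M 2 1 :=
  (⅟ (2 : k)) • ∑ σ : Equiv.Perm (Fin 2), (Equiv.Perm.sign σ : ℤ) • pa σ f2

/-- Skew-symmetrization `f̄3` of the third component of a weak morphism `A → B`. -/
def skewMor3 (A : WeakLie3 k L) (B : WeakLie3 k M) (f1 : MMap L M 1 0) (f2 : MMap L M 2 1)
    (f21 : MMap L M 2 2) (f3 : MMap L M 3 2) : MMap L M 3 2 :=
  (⅟ (2 : k) * ⅟ (3 : k)) • ∑ σ : Equiv.Perm (Fin 3), (Equiv.Perm.sign σ : ℤ) • pa σ f3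
  - (⅟ (2 : k) * ⅟ (2 : k) * ⅟ (2 : k) * ⅟ (3 : k)) •
      ∑ σ : Equiv.Perm (Fin 3), (Equiv.Perm.sign σ : ℤ) •
        pa σ (pc 2 0 1 f21 A.l2 + pc 2 1 0 f21 A.l2
          - fc2 2 B.l21 f2 f1 - fc2 2 B.l21 f1 f2)

end Skew

section Comp

variable {k : Type} [CommRing k] {L M N : ℤ → Type}
  [∀ i, AddCommGroup (L i)] [∀ i, Module k (L i)]
  [∀ i, AddCommGroup (M i)] [∀ i, Module k (M i)]
  [∀ i, AddCommGroup (N i)] [∀ i, Module k (N i)]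

/-- First component of the composition of weak morphisms. -/
def cmp1 (f1' : MMap M N 1 0) (f1 : MMap L M 1 0) : MMap L N 1 0 := fc1 0 f1' f1

/-- Second component of the composition of weak morphisms. -/
def cmp2 (f1' : MMap M N 1 0) (f2' : MMap M N 2 1) (f1 : MMap L M 1 0) (f2 : MMap L M 2 1) :
    MMap L N 2 1 := fc2 1 f2' f1 f1 + fc1 1 f1' f2

/-- `(f'∘f)21` component of the composition of weak morphisms. -/
def cmp21 (f1' : MMap M N 1 0) (f21' : MMap M N 2 2) (f1 : MMap L M 1 0)
    (f21 : MMap L M 2 2) : MMap L N 2 2 := fc2 2 f21' f1 f1 + fc1 2 f1' f21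

/-- Third component of the composition of weak morphisms. -/
def cmp3 (f1' : MMap M N 1 0) (f2' : MMap M N 2 1) (f3' : MMap M N 3 2)
    (f1 : MMap L M 1 0) (f2 : MMap L M 2 1) (f3 : MMap L M 3 2) : MMap L N 3 2 :=
  fc3 2 f3' f1 f1 f1 - fc2 2 f2' f2 f1 + fc2 2 f2' f1 f2 - pa (P12 3) (fc2 2 f2' f1 f2)
    + fc1 2 f1' f3

end Comp

end WL3
namespace WL3

/-! The chain complexes are concentrated in degrees `0, 1, 2`. Hence a map `L^⊗3 → N` of degree `3`
vanishes, in particular the homotopy `f21' ∘ (f2, f1) + f21' ∘ (f1, f2)`, and skew-symmetrization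
is even strictly functorial: a map `L^⊗3 → N` of degree `2` is determined by its values on arguments
of degree `0`, where Koszul signs disappear and the two sides can be compared directly. Write `Alt`
for the signed sum over `S₃`, and `φ = f2' ∘ (f2, f1)`, `ψ = f2' ∘ (f1, f2)`. Passing to the
composite contributes `-Alt φ + 2 Alt ψ` to `Alt f3` and `2 Alt φ + 2 Alt ψ` to the correction built
from `f21` and `λ21`, while the terms in `f̄2'` and `f̄2` of the composition formula amount to
`(1/4) (Alt ψ - Alt φ)`, and
`(1/6) (-Alt φ + 2 Alt ψ) - (1/24) (2 Alt φ + 2 Alt ψ) = (1/4) (Alt ψ - Alt φ)`. -/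

section Tuples

variable {L : ℤ → Type}

/-- The family consisting of one homogeneous element. -/
def single {i : ℤ} (x : L i) : ∀ a : Fin 1, L ((fun _ => i) a) := fun _ => x

/-- The family of homogeneous elements `x, y`. -/
def pair {i j : ℤ} (x : L i) (y : L j) : ∀ a, L (![i, j] a) :=
  Fin.cons x (Fin.cons y fun a => a.elim0)

/-- The family of homogeneous elements `x, y, z`. -/
def triple {i j l : ℤ} (x : L i) (y : L j) (z : L l) : ∀ a, L (![i, j, l] a) :=
  Fin.cons x (Fin.cons y (Fin.cons z fun a => a.elim0))

theorem tuple_ext {m : ℕ} {d d' : Fin m → ℤ} {x : ∀ a, L (d a)} {x' : ∀ a, L (d' a)}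
    (h : ∀ a, (⟨d a, x a⟩ : Sigma L) = ⟨d' a, x' a⟩) : ∃ hd : d = d', hd ▸ x = x' := by
  obtain rfl : d = d' := funext fun a => congrArg Sigma.fst (h a)
  exact ⟨rfl, funext fun a => eq_of_heq (Sigma.mk.inj (h a)).2⟩

theorem update_single {i : ℤ} (x z : L i) : Function.update (single x) 0 z = single z := by
  funext a
  rw [Subsingleton.elim a 0, Function.update_self]
  rfl

theorem update_pair_zero {i j : ℤ} (x : L i) (y : L j) (z : L i) :
    Function.update (pair x y) 0 z = pair z y := by
  funext a
  fin_cases a <;> rfl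

theorem update_pair_one {i j : ℤ} (x : L i) (y : L j) (z : L j) :
    Function.update (pair x y) 1 z = pair x z := by
  funext a
  fin_cases a <;> rfl

end Tuples

section Evaluation

variable {L M N : ℤ → Type} {m : ℕ} {r t : ℤ} {d : Fin m → ℤ}

/-- The value of `μ` on a family of homogeneous elements, transported to the degree `t`. -/
def ev (t : ℤ) (μ : MMap L M m r) (x : ∀ a, L (d a))
    (h : r + ∑ a, d a = t := by simp [Fin.sum_univ_succ]) : M t :=
  gcast h (μ d x)

theorem ev_congr (μ : MMap L M m r) {d' : Fin m → ℤ} {x : ∀ a, L (d a)}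
    {x' : ∀ a, L (d' a)} {h : r + ∑ a, d a = t} {h' : r + ∑ a, d' a = t}
    (hx : ∀ a, (⟨d a, x a⟩ : Sigma L) = ⟨d' a, x' a⟩) : ev t μ x h = ev t μ x' h' := by
  obtain ⟨rfl, rfl⟩ := tuple_ext hx
  rfl

theorem ext_pair {μ ν : MMap L M 2 r}
    (h : ∀ {i j t} (x : L i) (y : L j) (ht : r + ∑ a, ![i, j] a = t),
      ev t μ (pair x y) ht = ev t ν (pair x y) ht) : μ = ν := by
  funext d x
  have hd : r + ∑ a, ![d 0, d 1] a = r + ∑ a, d a := by simp [Fin.sum_univ_two]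
  have hx (a : Fin 2) : (⟨d a, x a⟩ : Sigma L) = ⟨_, pair (x 0) (x 1) a⟩ := by
    fin_cases a <;> rfl
  exact (ev_congr μ (h := rfl) hx).trans ((h _ _ hd).trans (ev_congr ν (h := rfl) hx).symm)

section Linear

variable {x : ∀ a, L (d a)} {h : r + ∑ a, d a = t}

theorem ev_smul {S : Type*} [∀ i, SMul S (M i)] (c : S) (μ : MMap L M m r) :
    ev t (c • μ) x h = c • ev t μ x h := by
  subst h; rfl

variable [∀ i, AddCommGroup (M i)]

theorem ev_add (μ ν : MMap L M m r) : ev t (μ + ν) x h = ev t μ x h + ev t ν x h := by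
  subst h; rfl

theorem ev_neg (μ : MMap L M m r) : ev t (-μ) x h = -ev t μ x h := by
  subst h; rfl

theorem ev_sub (μ ν : MMap L M m r) : ev t (μ - ν) x h = ev t μ x h - ev t ν x h := by
  subst h; rfl

theorem ev_pa (σ : Equiv.Perm (Fin m)) (μ : MMap L M m r) :
    ev t (pa σ μ) x h = koszulSign d σ •
      ev t μ (fun a => x (σ.symm a)) (by rw [Equiv.sum_comp σ.symm d, h]) := by
  subst h; rfl

end Linear

section Composition

variable {R s s₁ s₂ s₃ i j l : ℤ} {n n₁ n₂ n₃ : ℕ}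

theorem ev_fc1 (l : ℤ) (μ : MMap M N 1 r) (g : MMap L M m s) {h : r + s = R}
    {x : ∀ a, L (d a)} {ht : R + ∑ a, d a = t} (hl : s + ∑ a, d a = l) :
    ev t (fc1 R μ g h) x ht =
      ev t μ (single (ev l g x hl)) (by rw [Fin.sum_univ_one]; omega) := by
  subst h hl ht
  rfl

theorem ev_fc1_of_degree_zero (μ : MMap M N 1 0) (g : MMap L M m s) {h : 0 + s = R}
    {x : ∀ a, L (d a)} {ht : R + ∑ a, d a = t} :
    ev t (fc1 R μ g h) x ht = ev t μ (single (ev t g x (by omega))) :=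
  ev_fc1 t μ g (by omega)

theorem ev_fc2 [∀ i, AddCommGroup (N i)] (i j : ℤ) (μ : MMap M N 2 r) (g₁ : MMap L M n₁ s₁)
    (g₂ : MMap L M n₂ s₂) {h : r + (s₁ + s₂) = R} {d : Fin (n₁ + n₂) → ℤ} {d₁ : Fin n₁ → ℤ}
    {d₂ : Fin n₂ → ℤ} {x : ∀ a, L (d a)} (x₁ : ∀ a, L (d₁ a)) (x₂ : ∀ a, L (d₂ a))
    {ht : R + ∑ a, d a = t} (hx₁ : ∀ a, (⟨_, x (Fin.castAdd n₂ a)⟩ : Sigma L) = ⟨_, x₁ a⟩)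
    (hx₂ : ∀ a, (⟨_, x (Fin.natAdd n₁ a)⟩ : Sigma L) = ⟨_, x₂ a⟩)
    (hi : s₁ + ∑ a, d₁ a = i) (hj : s₂ + ∑ a, d₂ a = j)
    (ht' : r + ∑ a, ![i, j] a = t) :
    ev t (fc2 R μ g₁ g₂ h) x ht =
      (-1 : ℤ) ^ (s₂ * ∑ a, d₁ a).natAbs • ev t μ (pair (ev i g₁ x₁ hi) (ev j g₂ x₂ hj)) ht' := by
  obtain ⟨rfl, rfl⟩ := tuple_ext hx₁
  obtain ⟨rfl, rfl⟩ := tuple_ext hx₂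
  subst h hi hj ht
  exact congrArg ((-1 : ℤ) ^ (s₂ * ∑ a, d (Fin.castAdd n₂ a)).natAbs • ·)
    (ev_congr μ (Fin.forall_fin_two.2 ⟨rfl, rfl⟩) (h := sum2 ..))

theorem ev_fc2_pair [∀ i, AddCommGroup (N i)] (μ : MMap M N 2 r) (g₁ g₂ : MMap L M 1 0)
    {h : r + (0 + 0) = R} (x : L i) (y : L j) {ht : R + ∑ a, ![i, j] a = t} :
    ev t (fc2 R μ g₁ g₂ h) (pair x y) ht =
      ev t μ (pair (ev i g₁ (single x)) (ev j g₂ (single y))) (by rw [← ht, ← h]; simp) :=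
  (ev_fc2 i j μ g₁ g₂ (single x) (single y) (Fin.forall_fin_one.2 rfl)
    (Fin.forall_fin_one.2 rfl) (by simp) (by simp) (by rw [← ht, ← h]; simp)).trans (by simp)

theorem ev_fc2_triple_left [∀ i, AddCommGroup (N i)] (μ : MMap M N 2 r) (g₁ : MMap L M 2 s₁)
    (g₂ : MMap L M 1 s₂) {h : r + (s₁ + s₂) = R} (x y z : L 0) :
    ev R (fc2 R μ g₁ g₂ h) (triple x y z) =
      ev R μ (pair (ev s₁ g₁ (pair x y)) (ev s₂ g₂ (single z))) (by simpa using h) :=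
  (ev_fc2 s₁ s₂ μ g₁ g₂ (pair x y) (single z) (Fin.forall_fin_two.2 ⟨rfl, rfl⟩)
    (Fin.forall_fin_one.2 rfl) (by simp) (by simp) (by simpa using h)).trans (by simp)

theorem ev_fc2_triple_right [∀ i, AddCommGroup (N i)] (μ : MMap M N 2 r) (g₁ : MMap L M 1 s₁)
    (g₂ : MMap L M 2 s₂) {h : r + (s₁ + s₂) = R} (x y z : L 0) :
    ev R (fc2 R μ g₁ g₂ h) (triple x y z) =
      ev R μ (pair (ev s₁ g₁ (single x)) (ev s₂ g₂ (pair y z))) (by simpa using h) :=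
  (ev_fc2 s₁ s₂ μ g₁ g₂ (single x) (pair y z) (Fin.forall_fin_one.2 rfl)
    (Fin.forall_fin_two.2 ⟨rfl, rfl⟩) (by simp) (by simp) (by simpa using h)).trans (by simp)

theorem ev_fc3 [∀ i, AddCommGroup (N i)] (i j l : ℤ) (μ : MMap M N 3 r) (g₁ : MMap L M n₁ s₁)
    (g₂ : MMap L M n₂ s₂) (g₃ : MMap L M n₃ s₃) {h : r + (s₁ + s₂ + s₃) = R}
    {d : Fin (n₁ + n₂ + n₃) → ℤ} {d₁ : Fin n₁ → ℤ} {d₂ : Fin n₂ → ℤ} {d₃ : Fin n₃ → ℤ}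
    {x : ∀ a, L (d a)} (x₁ : ∀ a, L (d₁ a)) (x₂ : ∀ a, L (d₂ a)) (x₃ : ∀ a, L (d₃ a))
    {ht : R + ∑ a, d a = t}
    (hx₁ : ∀ a, (⟨_, x (Fin.castAdd n₃ (Fin.castAdd n₂ a))⟩ : Sigma L) = ⟨_, x₁ a⟩)
    (hx₂ : ∀ a, (⟨_, x (Fin.castAdd n₃ (Fin.natAdd n₁ a))⟩ : Sigma L) = ⟨_, x₂ a⟩)
    (hx₃ : ∀ a, (⟨_, x (Fin.natAdd (n₁ + n₂) a)⟩ : Sigma L) = ⟨_, x₃ a⟩)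
    (hi : s₁ + ∑ a, d₁ a = i) (hj : s₂ + ∑ a, d₂ a = j) (hl : s₃ + ∑ a, d₃ a = l)
    (ht' : r + ∑ a, ![i, j, l] a = t) :
    ev t (fc3 R μ g₁ g₂ g₃ h) x ht =
      (-1 : ℤ) ^ (s₂ * ∑ a, d₁ a + s₃ * (∑ a, d₁ a + ∑ a, d₂ a)).natAbs •
        ev t μ (triple (ev i g₁ x₁ hi) (ev j g₂ x₂ hj) (ev l g₃ x₃ hl)) ht' := by
  obtain ⟨rfl, rfl⟩ := tuple_ext hx₁
  obtain ⟨rfl, rfl⟩ := tuple_ext hx₂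
  obtain ⟨rfl, rfl⟩ := tuple_ext hx₃
  subst h hi hj hl ht
  refine congrArg (((-1 : ℤ) ^ _) • ·) (ev_congr μ (h := sum3 ..) fun a => ?_)
  fin_cases a <;> rfl

theorem ev_fc3_triple [∀ i, AddCommGroup (N i)] (μ : MMap M N 3 r) (g₁ g₂ g₃ : MMap L M 1 0)
    {h : r + (0 + 0 + 0) = R} (x y z : L 0) :
    ev R (fc3 R μ g₁ g₂ g₃ h) (triple x y z) =
      ev R μ (triple (ev 0 g₁ (single x)) (ev 0 g₂ (single y)) (ev 0 g₃ (single z)))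
        (by simpa [Fin.sum_univ_three] using h) :=
  (ev_fc3 0 0 0 μ g₁ g₂ g₃ (single x) (single y) (single z)
    (Fin.forall_fin_one.2 rfl) (Fin.forall_fin_one.2 rfl) (Fin.forall_fin_one.2 rfl)
    (by simp) (by simp) (by simp) (by simpa [Fin.sum_univ_three] using h)).trans (by simp)

theorem ev_pc_left [∀ i, AddCommGroup (L i)] [∀ i, AddCommGroup (M i)] (i : ℤ)
    (μ : MMap L M 2 r) (ν : MMap L L n s) {h : r + s = R} {d : Fin (0 + n + 1) → ℤ}
    {x : ∀ a, L (d a)} {ht : R + ∑ a, d a = t} {d' : Fin n → ℤ} (x' : ∀ a, L (d' a)) (y : L j)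
    (hx : ∀ a, (⟨_, x (Fin.castAdd 1 (Fin.natAdd 0 a))⟩ : Sigma L) = ⟨_, x' a⟩)
    (hy : (⟨_, x (Fin.natAdd (0 + n) 0)⟩ : Sigma L) = ⟨_, y⟩)
    (hi : s + ∑ a, d' a = i) (ht' : r + ∑ a, ![i, j] a = t) :
    ev t (pc R 0 1 μ ν h) x ht = ev t μ (pair (ev i ν x' hi) y) ht' := by
  obtain ⟨rfl, rfl⟩ := tuple_ext hx
  cases hy
  subst h hi ht
  refine (congrArg (· • _) (by simp)).trans ((one_smul ℤ _).trans
    (ev_congr (h := outDeg_sum 0 1 n r s d) μ (Fin.forall_fin_two.2 ⟨?_, ?_⟩)))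
  · rfl
  · rfl

theorem ev_pc_right [∀ i, AddCommGroup (L i)] [∀ i, AddCommGroup (M i)] (j : ℤ)
    (μ : MMap L M 2 r) (ν : MMap L L n s) {h : r + s = R} {d : Fin (1 + n + 0) → ℤ}
    {x : ∀ a, L (d a)} {ht : R + ∑ a, d a = t} {d' : Fin n → ℤ} (y : L i) (x' : ∀ a, L (d' a))
    (hy : (⟨_, x (Fin.castAdd 0 (Fin.castAdd n 0))⟩ : Sigma L) = ⟨_, y⟩)
    (hx : ∀ a, (⟨_, x (Fin.castAdd 0 (Fin.natAdd 1 a))⟩ : Sigma L) = ⟨_, x' a⟩)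
    (hj : s + ∑ a, d' a = j) (ht' : r + ∑ a, ![i, j] a = t) :
    ev t (pc R 1 0 μ ν h) x ht =
      (-1 : ℤ) ^ (s * i).natAbs • ev t μ (pair y (ev j ν x' hj)) ht' := by
  obtain ⟨rfl, rfl⟩ := tuple_ext hx
  cases hy
  subst h hj ht
  refine (congrArg (· • _) (by simp)).trans (congrArg ((-1 : ℤ) ^ _ • ·)
    (ev_congr (h := outDeg_sum 1 0 n r s d) μ (Fin.forall_fin_two.2 ⟨?_, ?_⟩)))
  · rfl
  · rfl

theorem ev_pc_triple_left [∀ i, AddCommGroup (L i)] [∀ i, AddCommGroup (M i)] (μ : MMap L M 2 r)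
    (ν : MMap L L 2 s) {h : r + s = R} (x y z : L 0) :
    ev R (pc R 0 1 μ ν h) (triple x y z) =
      ev R μ (pair (ev s ν (pair x y)) z) (by simpa using h) :=
  ev_pc_left s μ ν (pair x y) z (Fin.forall_fin_two.2 ⟨rfl, rfl⟩) rfl (by simp)
    (by simpa using h)

theorem ev_pc_triple_right [∀ i, AddCommGroup (L i)] [∀ i, AddCommGroup (M i)] (μ : MMap L M 2 r)
    (ν : MMap L L 2 s) {h : r + s = R} (x y z : L 0) :
    ev R (pc R 1 0 μ ν h) (triple x y z) =
      ev R μ (pair x (ev s ν (pair y z))) (by simpa using h) :=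
  (ev_pc_right s μ ν x (pair y z) rfl (Fin.forall_fin_two.2 ⟨rfl, rfl⟩) (by simp)
    (by simpa using h)).trans (by simp)

theorem bd_two [∀ i, AddCommGroup (L i)] [∀ i, AddCommGroup (M i)] (D' : MMap M M 1 (-1))
    (D : MMap L L 1 (-1)) (μ : MMap L M 2 r) (h : -1 + r = R) :
    bd R D' D μ h = fc1 R D' μ h - (-1 : ℤ) ^ r.natAbs •
      (pc R 0 1 μ D (by omega) + pc R 1 0 μ D (by omega)) := by
  subst h
  rw [bd, bdry, Fin.sum_univ_two]
  rfl

theorem ev_bd_pair [∀ i, AddCommGroup (L i)] [∀ i, AddCommGroup (M i)] (i' j' l : ℤ)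
    (D' : MMap M M 1 (-1)) (D : MMap L L 1 (-1)) (μ : MMap L M 2 r) {h : -1 + r = R} (x : L i)
    (y : L j) (ht : R + (i + j) = t) (hi : -1 + i = i') (hj : -1 + j = j') (hl : r + (i + j) = l) :
    ev t (bd R D' D μ h) (pair x y) (by simpa using ht) =
      ev t D' (single (ev l μ (pair x y) (by simpa using hl))) (by simp; omega) -
        (-1 : ℤ) ^ r.natAbs •
          (ev t μ (pair (ev i' D (single x) (by simpa using hi)) y) (by simp; omega) +
            (-1 : ℤ) ^ i.natAbs •
              ev t μ (pair x (ev j' D (single y) (by simpa using hj))) (by simp; omega)) := by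
  rw [bd_two, ev_sub, ev_smul, ev_add, ev_fc1 l D' μ (by simpa using hl),
    ev_pc_left i' μ D (single x) y (Fin.forall_fin_one.2 rfl) rfl (by simpa using hi)
      (by simp; omega),
    ev_pc_right j' μ D x (single y) rfl (Fin.forall_fin_one.2 rfl) (by simpa using hj)
      (by simp; omega)]
  simp

end Composition

section PermutationAction

variable [∀ i, AddCommGroup (M i)] {i j : ℤ}

theorem koszulSign_one (d : Fin m → ℤ) : koszulSign d 1 = 1 :=
  Finset.prod_eq_one fun _ hp =>
    absurd (Finset.mem_filter.1 hp).2.1 (Finset.mem_filter.1 hp).2.2.not_gt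

theorem koszulSign_of_eq_zero (hd : ∀ a, d a = 0) (σ : Equiv.Perm (Fin m)) :
    koszulSign d σ = 1 := by
  simp [koszulSign, hd]

theorem koszulSign_P12 (d : Fin 2 → ℤ) : koszulSign d (P12 2) = (-1) ^ (d 0 * d 1).natAbs := by
  have inversions : Finset.univ.filter
      (fun p : Fin 2 × Fin 2 => p.1 < p.2 ∧ P12 2 p.2 < P12 2 p.1) = {(0, 1)} := by decide
  rw [koszulSign, inversions, Finset.prod_singleton]

theorem pa_one (μ : MMap L M m r) : pa 1 μ = μ := by
  funext d x
  rw [pa, koszulSign_one, one_smul]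
  rfl

theorem ev_pa_P12_pair (μ : MMap L M 2 r) (x : L i) (y : L j) {ht : r + ∑ a, ![i, j] a = t} :
    ev t (pa (P12 2) μ) (pair x y) ht =
      (-1 : ℤ) ^ (i * j).natAbs • ev t μ (pair y x) (by rw [← ht]; simp [add_comm]) := by
  rw [ev_pa, koszulSign_P12]
  exact congrArg (_ • ·) (ev_congr μ (Fin.forall_fin_two.2 ⟨rfl, rfl⟩))

theorem ev_pa_triple (σ : Equiv.Perm (Fin 3)) (μ : MMap L M 3 r) (x y z : L 0) :
    ev r (pa σ μ) (triple x y z) =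
      ev r μ (triple (![x, y, z] (σ.symm 0)) (![x, y, z] (σ.symm 1)) (![x, y, z] (σ.symm 2))) := by
  have htriple (a : Fin 3) : (⟨_, triple x y z a⟩ : Sigma L) = ⟨0, ![x, y, z] a⟩ := by
    fin_cases a <;> rfl
  rw [ev_pa, koszulSign_of_eq_zero (fun a => by fin_cases a <;> rfl), one_smul]
  refine ev_congr μ fun a => (htriple _).trans ?_
  fin_cases a <;> rfl

theorem ev_pa_P12_triple (μ : MMap L M 3 r) (x y z : L 0) :
    ev r (pa (P12 3) μ) (triple x y z) = ev r μ (triple y x z) :=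
  ev_pa_triple ..

theorem ev_sum_sign_pa_pair (μ : MMap L M 2 r) (x : L i) (y : L j)
    {ht : r + ∑ a, ![i, j] a = t} :
    ev t (∑ σ : Equiv.Perm (Fin 2), (Equiv.Perm.sign σ : ℤ) • pa σ μ) (pair x y) ht =
      ev t μ (pair x y) ht -
        (-1 : ℤ) ^ (i * j).natAbs • ev t μ (pair y x) (by rw [← ht]; simp [add_comm]) := by
  have huniv : (Finset.univ : Finset (Equiv.Perm (Fin 2))) = {1, P12 2} := by decide
  have hsign : Equiv.Perm.sign (P12 2) = -1 := by decide
  rw [huniv, Finset.sum_pair (by decide), Equiv.Perm.sign_one, hsign, pa_one, ev_add, ev_smul,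
    ev_smul, ev_pa_P12_pair, Units.val_one, one_smul, Units.val_neg, Units.val_one, neg_one_smul,
    sub_eq_add_neg]

/-- The signed sum of the values of `μ` on the permutations of three elements of degree `0`. -/
def altEv (μ : MMap L M 3 r) (x y z : L 0) : M r :=
  ev r μ (triple x y z) - ev r μ (triple y x z) - ev r μ (triple z y x) - ev r μ (triple x z y) +
    ev r μ (triple y z x) + ev r μ (triple z x y)

theorem ev_sum_sign_pa_triple (μ : MMap L M 3 r) (x y z : L 0) :
    ev r (∑ σ : Equiv.Perm (Fin 3), (Equiv.Perm.sign σ : ℤ) • pa σ μ) (triple x y z) =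
      altEv μ x y z := by
  have huniv : (Finset.univ : Finset (Equiv.Perm (Fin 3))) =
      {1, Equiv.swap 0 1, Equiv.swap 0 2, Equiv.swap 1 2,
        Equiv.swap 0 1 * Equiv.swap 1 2, Equiv.swap 1 2 * Equiv.swap 0 1} := by decide
  rw [huniv, Finset.sum_insert (by decide), Finset.sum_insert (by decide),
    Finset.sum_insert (by decide), Finset.sum_insert (by decide), Finset.sum_insert (by decide),
    Finset.sum_singleton]
  simp only [ev_add, ev_neg, ev_pa_triple, Equiv.Perm.sign_one, Equiv.Perm.sign_mul,
    Equiv.Perm.sign_swap', Fin.reduceEq, if_false, Units.val_one, Units.val_neg, neg_smul, one_smul,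
    mul_neg, mul_one, neg_neg]
  change ev r μ (triple x y z) + (-ev r μ (triple y x z) + (-ev r μ (triple z y x) +
    (-ev r μ (triple x z y) + (ev r μ (triple z x y) + ev r μ (triple y z x))))) = _
  rw [altEv]
  abel

end PermutationAction

end Evaluation

section LinearMaps

variable {k : Type} [CommRing k] {L M : ℤ → Type} [∀ i, AddCommGroup (L i)]
  [∀ i, AddCommGroup (M i)] [∀ i, Module k (L i)] [∀ i, Module k (M i)] {r i j t : ℤ}

/-- The component of a multilinear map of one argument in degree `i`, as a linear map. -/
def IsMultilinear.linearMap {μ : MMap L M 1 r} (hμ : IsMultilinear k μ)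
    (h : r + ∑ _a : Fin 1, i = t) : L i →ₗ[k] M t where
  toFun x := ev t μ (single x) h
  map_add' x y := by
    subst h
    have := (hμ _ (single x) 0).1 x y
    rwa [update_single, update_single, update_single] at this
  map_smul' c x := by
    subst h
    have := (hμ _ (single x) 0).2 c x
    rwa [update_single, update_single] at this

/-- The component of a multilinear map of two arguments in degrees `i, j`, as a bilinear map. -/
def IsMultilinear.bilinearMap {μ : MMap L M 2 r} (hμ : IsMultilinear k μ)
    (h : r + ∑ a, ![i, j] a = t) : L i →ₗ[k] L j →ₗ[k] M t :=
  LinearMap.mk₂ k (fun x y => ev t μ (pair x y) h)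
    (fun x x' y => by
      subst h
      have hx (z : L i) := congrArg (μ _) (update_pair_zero x y z)
      exact (hx _).symm.trans (((hμ _ (pair x y) 0).1 x x').trans
        (congrArg₂ (· + ·) (hx x) (hx x'))))
    (fun c x y => by
      subst h
      have hx (z : L i) := congrArg (μ _) (update_pair_zero x y z)
      exact (hx _).symm.trans (((hμ _ (pair x y) 0).2 c x).trans (congrArg (c • ·) (hx x))))
    (fun x y y' => by
      subst h
      have hy (z : L j) := congrArg (μ _) (update_pair_one x y z)
      exact (hy _).symm.trans (((hμ _ (pair x y) 1).1 y y').trans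
        (congrArg₂ (· + ·) (hy y) (hy y'))))
    (fun c x y => by
      subst h
      have hy (z : L j) := congrArg (μ _) (update_pair_one x y z)
      exact (hy _).symm.trans (((hμ _ (pair x y) 1).2 c y).trans (congrArg (c • ·) (hy y))))

theorem IsMultilinear.linearMap_apply {μ : MMap L M 1 r} (hμ : IsMultilinear k μ)
    (h : r + ∑ _a : Fin 1, i = t) (x : L i) : hμ.linearMap h x = ev t μ (single x) h := rfl

theorem IsMultilinear.bilinearMap_apply {μ : MMap L M 2 r} (hμ : IsMultilinear k μ)
    (h : r + ∑ a, ![i, j] a = t) (x : L i) (y : L j) :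
    hμ.bilinearMap h x y = ev t μ (pair x y) h := rfl

end LinearMaps

theorem altEv_fc1 {k : Type} [CommRing k] {L M N : ℤ → Type} [∀ i, AddCommGroup (M i)]
    [∀ i, AddCommGroup (N i)] [∀ i, Module k (M i)] [∀ i, Module k (N i)] {μ : MMap M N 1 0}
    (hμ : IsMultilinear k μ) {s : ℤ} (g : MMap L M 3 s) (x y z : L 0) :
    altEv (fc1 s μ g (zero_add s)) x y z = ev s μ (single (altEv g x y z)) := by
  simp only [altEv, ev_fc1_of_degree_zero, ← hμ.linearMap_apply, map_add, map_sub]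

theorem gcast_injective {M : ℤ → Type} {i j : ℤ} (h : i = j) :
    Function.Injective (gcast h : M i → M j) := by
  subst h; exact Function.injective_id

section PreservesZero

variable {L M N : ℤ → Type} [∀ i, AddCommGroup (L i)] [∀ i, AddCommGroup (M i)]
  [∀ i, AddCommGroup (N i)]

theorem gcast_zero {i j : ℤ} (h : i = j) : gcast h (0 : L i) = 0 := by
  subst h; rfl

/-- A graded map that vanishes as soon as one of its arguments does. This is all that the
degree arguments need from multilinearity, and it is stable under every operation on graded maps. -/
def PreservesZero {m : ℕ} {r : ℤ} (μ : MMap L M m r) : Prop :=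
  ∀ (d : Fin m → ℤ) (x : ∀ a, L (d a)) (a : Fin m), x a = 0 → μ d x = 0

variable {m : ℕ} {r : ℤ} {μ ν : MMap L M m r}

theorem IsMultilinear.preservesZero {k : Type} [CommRing k] [∀ i, Module k (L i)]
    [∀ i, Module k (M i)] (hμ : IsMultilinear k μ) : PreservesZero μ := by
  intro d x a ha
  have h := (hμ d x a).2 0 0
  rwa [zero_smul, zero_smul, ← ha, Function.update_eq_self] at h

namespace PreservesZero

theorem zero : PreservesZero (0 : MMap L M m r) := fun _ _ _ _ => rfl

theorem add (hμ : PreservesZero μ) (hν : PreservesZero ν) : PreservesZero (μ + ν) :=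
  fun d x a ha => by simp [hμ d x a ha, hν d x a ha]

theorem sub (hμ : PreservesZero μ) (hν : PreservesZero ν) : PreservesZero (μ - ν) :=
  fun d x a ha => by simp [hμ d x a ha, hν d x a ha]

theorem smul {S : Type*} [∀ i, SMulZeroClass S (M i)] (hμ : PreservesZero μ) (c : S) :
    PreservesZero (c • μ) :=
  fun d x a ha => by simp [hμ d x a ha]

theorem pa (hμ : PreservesZero μ) (σ : Equiv.Perm (Fin m)) : PreservesZero (pa σ μ) := by
  intro d x a ha
  obtain ⟨b, rfl⟩ := σ.symm.surjective a
  rw [WL3.pa, hμ (fun a => d (σ.symm a)) (fun a => x (σ.symm a)) b ha, gcast_zero, smul_zero]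

theorem sum_sign_pa (hμ : PreservesZero μ) :
    PreservesZero (∑ σ : Equiv.Perm (Fin m), (Equiv.Perm.sign σ : ℤ) • WL3.pa σ μ) :=
  Finset.sum_induction _ PreservesZero (fun _ _ => add) zero fun σ _ => (hμ.pa σ).smul _

theorem mcast {m' : ℕ} {r' : ℤ} (hm : m = m') (hr : r = r') (hμ : PreservesZero μ) :
    PreservesZero (mcast hm hr μ) := by
  subst hm hr; exact hμ

theorem fc1 {R s t : ℤ} {μ : MMap M N 1 s} {g : MMap L M m t} (hμ : PreservesZero μ)
    (hg : PreservesZero g) (h : s + t = R) : PreservesZero (fc1 R μ g h) := by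
  refine mcast _ _ fun d x a ha => ?_
  rw [comp₁, hμ _ _ 0 (hg d x a ha), gcast_zero]

theorem fc2 {R s s₁ s₂ : ℤ} {n₁ n₂ : ℕ} {μ : MMap M N 2 s} {g₁ : MMap L M n₁ s₁}
    {g₂ : MMap L M n₂ s₂} (hμ : PreservesZero μ) (hg₁ : PreservesZero g₁)
    (hg₂ : PreservesZero g₂) (h : s + (s₁ + s₂) = R) : PreservesZero (fc2 R μ g₁ g₂ h) := by
  refine mcast _ _ fun d x a ha => ?_
  rw [comp₂]
  induction a using Fin.addCases with
  | left a =>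
    rw [hμ _ _ 0, gcast_zero, smul_zero]
    rw [hg₁ _ (fun b => x (Fin.castAdd n₂ b)) a ha]
    rfl
  | right a =>
    rw [hμ _ _ 1, gcast_zero, smul_zero]
    rw [hg₂ _ (fun b => x (Fin.natAdd n₁ b)) a ha]
    rfl

theorem fc3 {R s s₁ s₂ s₃ : ℤ} {n₁ n₂ n₃ : ℕ} {μ : MMap M N 3 s} {g₁ : MMap L M n₁ s₁}
    {g₂ : MMap L M n₂ s₂} {g₃ : MMap L M n₃ s₃} (hμ : PreservesZero μ) (hg₁ : PreservesZero g₁)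
    (hg₂ : PreservesZero g₂) (hg₃ : PreservesZero g₃) (h : s + (s₁ + s₂ + s₃) = R) :
    PreservesZero (fc3 R μ g₁ g₂ g₃ h) := by
  refine mcast _ _ fun d x a ha => ?_
  rw [comp₃]
  induction a using Fin.addCases with
  | left a =>
    induction a using Fin.addCases with
    | left a =>
      rw [hμ _ _ 0, gcast_zero, smul_zero]
      rw [hg₁ _ (fun b => x (Fin.castAdd n₃ (Fin.castAdd n₂ b))) a ha]
      rfl
    | right a =>
      rw [hμ _ _ 1, gcast_zero, smul_zero]
      rw [hg₂ _ (fun b => x (Fin.castAdd n₃ (Fin.natAdd n₁ b))) a ha]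
      rfl
  | right a =>
    rw [hμ _ _ 2, gcast_zero, smul_zero]
    rw [hg₃ _ (fun b => x (Fin.natAdd (n₁ + n₂) b)) a ha]
    rfl

theorem pc {R s t : ℤ} {m₁ m₂ n : ℕ} {μ : MMap L M (m₁ + 1 + m₂) s} {ν : MMap L L n t}
    (hμ : PreservesZero μ) (hν : PreservesZero ν) (h : s + t = R) :
    PreservesZero (pc R m₁ m₂ μ ν h) := by
  refine mcast _ _ fun d x a ha => ?_
  rw [pcomp]
  induction a using Fin.addCases with
  | left a =>
    induction a using Fin.addCases with
    | left a =>
      rw [hμ _ _ (Fin.castAdd m₂ (Fin.castAdd 1 a)), gcast_zero, smul_zero]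
      simp only [Fin.addCases_left, ha, gcast_zero]
    | right a =>
      rw [hμ _ _ (Fin.castAdd m₂ (Fin.natAdd m₁ 0)), gcast_zero, smul_zero]
      simp only [Fin.addCases_left, Fin.addCases_right]
      rw [hν _ _ a ha, gcast_zero]
  | right a =>
    rw [hμ _ _ (Fin.natAdd (m₁ + 1) a), gcast_zero, smul_zero]
    simp only [Fin.addCases_right, ha, gcast_zero]

theorem ext_of_le {n : ℤ} (hμ : PreservesZero μ) (hν : PreservesZero ν)
    (hL : ∀ i < 0, ∀ x : L i, x = 0) (hM : ∀ i, n < i → ∀ x : M i, x = 0) (hr : n ≤ r)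
    (h : ∀ x : Fin m → L 0, μ (fun _ => 0) x = ν (fun _ => 0) x) : μ = ν := by
  funext d x
  by_cases hneg : ∃ a, d a < 0
  · obtain ⟨a, ha⟩ := hneg
    rw [hμ d x a (hL _ ha _), hν d x a (hL _ ha _)]
  push Not at hneg
  by_cases hzero : ∀ a, d a = 0
  · obtain rfl : d = fun _ => 0 := funext hzero
    exact h x
  push Not at hzero
  obtain ⟨a, ha⟩ := hzero
  have hsum : 0 < ∑ a, d a :=
    Finset.sum_pos' (fun a _ => hneg a) ⟨a, Finset.mem_univ a, (hneg a).lt_of_ne' ha⟩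
  rw [hM _ (by omega) (μ d x), hM _ (by omega) (ν d x)]

theorem ext_triple {n : ℤ} {μ ν : MMap L M 3 r} (hμ : PreservesZero μ) (hν : PreservesZero ν)
    (hL : ∀ i < 0, ∀ x : L i, x = 0) (hM : ∀ i, n < i → ∀ x : M i, x = 0) (hr : n ≤ r)
    (h : ∀ x y z : L 0, ev r μ (triple x y z) = ev r ν (triple x y z)) : μ = ν := by
  refine hμ.ext_of_le hν hL hM hr fun x => ?_
  have hd : r + ∑ _a : Fin 3, (0 : ℤ) = r := by simp
  have hx (a : Fin 3) : (⟨0, x a⟩ : Sigma L) = ⟨_, triple (x 0) (x 1) (x 2) a⟩ := by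
    fin_cases a <;> rfl
  exact gcast_injective hd
    ((ev_congr μ (h := hd) hx).trans ((h _ _ _).trans (ev_congr ν (h := hd) hx).symm))

theorem eq_zero_of_lt {n : ℤ} (hμ : PreservesZero μ) (hL : ∀ i < 0, ∀ x : L i, x = 0)
    (hM : ∀ i, n < i → ∀ x : M i, x = 0) (hr : n < r) : μ = 0 :=
  hμ.ext_of_le zero hL hM hr.le fun _ => hM _ (by simpa using hr) _

end PreservesZero

theorem bd_zero {R : ℤ} {D' : MMap M M 1 (-1)} (hD' : PreservesZero D') (D : MMap L L 1 (-1))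
    (h : -1 + r = R) : bd R D' D (0 : MMap L M m r) h = 0 := by
  have comp_zero : comp₁ D' (0 : MMap L M m r) = 0 := by
    funext d x
    rw [comp₁, hD' _ _ 0 rfl, gcast_zero]
    rfl
  have mcast_zero {a b : ℕ} {s t : ℤ} (ha : a = b) (hs : s = t) :
      mcast ha hs (0 : MMap L M a s) = 0 := by
    subst ha hs
    rfl
  have pcomp_zero (m₁ m₂ : ℕ) : pcomp m₁ m₂ (0 : MMap L M (m₁ + 1 + m₂) r) D = 0 := by
    funext d x
    simp only [pcomp, Pi.zero_apply, gcast_zero, smul_zero]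
  rw [bd, bdry, comp_zero]
  simp only [mcast_zero, pcomp_zero, Finset.sum_const_zero, smul_zero, sub_zero]

end PreservesZero

section WeakMorphisms

variable {k : Type} [CommRing k] {L M : ℤ → Type} [∀ i, AddCommGroup (L i)]
  [∀ i, Module k (L i)] [∀ i, AddCommGroup (M i)] [∀ i, Module k (M i)]

theorem WeakLie3.ev_D_degree_zero (A : WeakLie3 k L) (x : L 0) : ev (-1) A.D (single x) = 0 :=
  A.bound _ (.inl (by decide)) _

variable {A : WeakLie3 k L} {B : WeakLie3 k M} {f1 : MMap L M 1 0} {f2 : MMap L M 2 1}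
  {f21 : MMap L M 2 2} {f3 : MMap L M 3 2}

theorem IsWeakMorphism.ev_f1_l2 (hf : IsWeakMorphism k A B f1 f2 f21 f3) (x y : L 0) :
    ev 0 f1 (single (ev 0 A.l2 (pair x y))) =
      ev 0 B.D (single (ev 1 f2 (pair x y))) +
        ev 0 B.l2 (pair (ev 0 f1 (single x)) (ev 0 f1 (single y))) := by
  have hbd : ev 0 (bd 0 B.D A.D f2) (pair x y) = ev 0 B.D (single (ev 1 f2 (pair x y))) := by
    rw [ev_bd_pair (R := 0) (t := 0) (-1) (-1) 1 B.D A.D f2 x y rfl rfl rfl rfl, A.ev_D_degree_zero,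
      A.ev_D_degree_zero]
    simp only [← hf.lin2.bilinearMap_apply, map_zero, LinearMap.zero_apply, smul_zero, add_zero,
      sub_zero]
  rw [← hbd, hf.m2, ev_sub, ev_fc1_of_degree_zero, ev_fc2_pair, sub_add_cancel]

theorem IsWeakMorphism.ev_f21_D_left (hf : IsWeakMorphism k A B f1 f2 f21 f3) (u : L 1) (x : L 0) :
    ev 2 f21 (pair (ev 0 A.D (single u)) x) =
      ev 2 f2 (pair u x) + ev 2 f2 (pair x u) - ev 2 f1 (single (ev 2 A.l21 (pair u x))) +
        ev 2 B.l21 (pair (ev 1 f1 (single u)) (ev 0 f1 (single x))) := by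
  have hf21 : ev 3 f21 (pair u x) = 0 := B.bound 3 (.inr (by decide)) _
  have hbd : ev 2 (bd 1 B.D A.D f21) (pair u x) =
      -ev 2 f21 (pair (ev 0 A.D (single u)) x) := by
    rw [ev_bd_pair (R := 1) (t := 2) 0 (-1) 3 B.D A.D f21 u x rfl rfl rfl rfl,
      A.ev_D_degree_zero, hf21]
    simp only [← hf.lin21.bilinearMap_apply, ← B.linD.linearMap_apply, map_zero, smul_zero,
      add_zero, zero_sub]
    exact congrArg Neg.neg (one_zsmul _)
  rw [← neg_inj, ← hbd, hf.m5, ev_sub, ev_add, ev_sub, ev_neg, ev_pa_P12_pair,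
    ev_fc1_of_degree_zero, ev_fc2_pair, show (-1 : ℤ) ^ (1 * 0 : ℤ).natAbs = 1 from rfl, one_zsmul]
  abel

theorem IsWeakMorphism.ev_f21_D_right (hf : IsWeakMorphism k A B f1 f2 f21 f3) (x : L 0) (u : L 1) :
    ev 2 f21 (pair x (ev 0 A.D (single u))) =
      ev 2 f2 (pair x u) + ev 2 f2 (pair u x) - ev 2 f1 (single (ev 2 A.l21 (pair x u))) +
        ev 2 B.l21 (pair (ev 0 f1 (single x)) (ev 1 f1 (single u))) := by
  have hf21 : ev 3 f21 (pair x u) = 0 := B.bound 3 (.inr (by decide)) _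
  have hbd : ev 2 (bd 1 B.D A.D f21) (pair x u) =
      -ev 2 f21 (pair x (ev 0 A.D (single u))) := by
    rw [ev_bd_pair (R := 1) (t := 2) (-1) 0 3 B.D A.D f21 x u rfl rfl rfl rfl,
      A.ev_D_degree_zero, hf21]
    simp only [← hf.lin21.bilinearMap_apply, ← B.linD.linearMap_apply, map_zero,
      LinearMap.zero_apply, zero_add, zero_sub]
    exact congrArg Neg.neg ((one_zsmul _).trans (one_zsmul _))
  rw [← neg_inj, ← hbd, hf.m5, ev_sub, ev_add, ev_sub, ev_neg, ev_pa_P12_pair,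
    ev_fc1_of_degree_zero, ev_fc2_pair, show (-1 : ℤ) ^ (0 * 1 : ℤ).natAbs = 1 from rfl, one_zsmul]
  abel

end WeakMorphisms

section Composition

variable {L M N : ℤ → Type} {i j t : ℤ}

theorem ev_cmp1 (f1' : MMap M N 1 0) (f1 : MMap L M 1 0) (x : L i) :
    ev i (cmp1 f1' f1) (single x) = ev i f1' (single (ev i f1 (single x))) :=
  ev_fc1_of_degree_zero ..

variable [∀ i, AddCommGroup (N i)]

theorem ev_cmp2 (f1' : MMap M N 1 0) (f2' : MMap M N 2 1) (f1 : MMap L M 1 0) (f2 : MMap L M 2 1)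
    (x : L i) (y : L j) {ht : 1 + ∑ a, ![i, j] a = t} :
    ev t (cmp2 f1' f2' f1 f2) (pair x y) ht =
      ev t f2' (pair (ev i f1 (single x)) (ev j f1 (single y))) ht +
        ev t f1' (single (ev t f2 (pair x y) ht)) := by
  rw [cmp2, ev_add, ev_fc2_pair, ev_fc1_of_degree_zero]

theorem ev_cmp21 (f1' : MMap M N 1 0) (f21' : MMap M N 2 2) (f1 : MMap L M 1 0)
    (f21 : MMap L M 2 2) (x : L i) (y : L j) {ht : 2 + ∑ a, ![i, j] a = t} :
    ev t (cmp21 f1' f21' f1 f21) (pair x y) ht =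
      ev t f21' (pair (ev i f1 (single x)) (ev j f1 (single y))) ht +
        ev t f1' (single (ev t f21 (pair x y) ht)) := by
  rw [cmp21, ev_add, ev_fc2_pair, ev_fc1_of_degree_zero]

theorem altEv_fc3 {s : ℤ} (μ : MMap M N 3 s) (f1 : MMap L M 1 0) (x y z : L 0) :
    altEv (fc3 s μ f1 f1 f1 (add_zero s)) x y z =
      altEv μ (ev 0 f1 (single x)) (ev 0 f1 (single y)) (ev 0 f1 (single z)) := by
  simp only [altEv, ev_fc3_triple]

theorem ev_cmp3 (f1' : MMap M N 1 0) (f2' : MMap M N 2 1) (f3' : MMap M N 3 2)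
    (f1 : MMap L M 1 0) (f2 : MMap L M 2 1) (f3 : MMap L M 3 2) (x y z : L 0) :
    ev 2 (cmp3 f1' f2' f3' f1 f2 f3) (triple x y z) =
      ev 2 f3' (triple (ev 0 f1 (single x)) (ev 0 f1 (single y)) (ev 0 f1 (single z))) -
        ev 2 (fc2 2 f2' f2 f1) (triple x y z) + ev 2 (fc2 2 f2' f1 f2) (triple x y z) -
        ev 2 (fc2 2 f2' f1 f2) (triple y x z) + ev 2 f1' (single (ev 2 f3 (triple x y z))) := by
  rw [cmp3, ev_add, ev_sub, ev_add, ev_sub, ev_fc3_triple, ev_pa_P12_triple, ev_fc1_of_degree_zero]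

theorem altEv_cmp3 {k : Type} [CommRing k] [∀ i, AddCommGroup (M i)] [∀ i, Module k (M i)]
    [∀ i, Module k (N i)] {f1' : MMap M N 1 0} (hf1' : IsMultilinear k f1') (f2' : MMap M N 2 1)
    (f3' : MMap M N 3 2) (f1 : MMap L M 1 0) (f2 : MMap L M 2 1) (f3 : MMap L M 3 2)
    (x y z : L 0) :
    altEv (cmp3 f1' f2' f3' f1 f2 f3) x y z =
      altEv f3' (ev 0 f1 (single x)) (ev 0 f1 (single y)) (ev 0 f1 (single z)) -
        altEv (fc2 2 f2' f2 f1) x y z + (2 : ℤ) • altEv (fc2 2 f2' f1 f2) x y z +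
        ev 2 f1' (single (altEv f3 x y z)) := by
  rw [← altEv_fc1 hf1']
  simp only [altEv, ev_cmp3, ev_fc1_of_degree_zero]
  abel

end Composition

section SkewCorrection

variable {k : Type} [CommRing k] {L M N : ℤ → Type} [∀ i, AddCommGroup (L i)]
  [∀ i, AddCommGroup (M i)] [∀ i, AddCommGroup (N i)] [∀ i, Module k (L i)]
  [∀ i, Module k (M i)] [∀ i, Module k (N i)] {A : WeakLie3 k L} {B : WeakLie3 k M}
  {C : WeakLie3 k N}

/-- The map `f21 ∘₁ λ2 + f21 ∘₂ λ2 - λ21' ∘ (f2, f1) - λ21' ∘ (f1, f2)` whose alternation corrects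
that of `f3` in the skew-symmetrization of a weak morphism. -/
def skewCorrection (A : WeakLie3 k L) (B : WeakLie3 k M) (f1 : MMap L M 1 0) (f2 : MMap L M 2 1)
    (f21 : MMap L M 2 2) : MMap L M 3 2 :=
  pc 2 0 1 f21 A.l2 + pc 2 1 0 f21 A.l2 - fc2 2 B.l21 f2 f1 - fc2 2 B.l21 f1 f2

theorem ev_skewCorrection (A : WeakLie3 k L) (B : WeakLie3 k M) (f1 : MMap L M 1 0)
    (f2 : MMap L M 2 1) (f21 : MMap L M 2 2) (x y z : L 0) :
    ev 2 (skewCorrection A B f1 f2 f21) (triple x y z) =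
      ev 2 f21 (pair (ev 0 A.l2 (pair x y)) z) + ev 2 f21 (pair x (ev 0 A.l2 (pair y z))) -
        ev 2 B.l21 (pair (ev 1 f2 (pair x y)) (ev 0 f1 (single z))) -
        ev 2 B.l21 (pair (ev 0 f1 (single x)) (ev 1 f2 (pair y z))) := by
  rw [skewCorrection, ev_sub, ev_sub, ev_add, ev_pc_triple_left, ev_pc_triple_right,
    ev_fc2_triple_left, ev_fc2_triple_right]

variable {f1 : MMap L M 1 0} {f2 : MMap L M 2 1} {f21 : MMap L M 2 2} {f3 : MMap L M 3 2}
  {f1' : MMap M N 1 0} {f2' : MMap M N 2 1} {f21' : MMap M N 2 2} {f3' : MMap M N 3 2}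

/- By (M2) for `f`, the argument `f1 (λ2 (x, y))` of `f21'` differs from `λ2' (f1 x, f1 y)` by the
boundary of `f2 (x, y)`, on which (M5) for `f'` evaluates `f21'`: hence the terms in `f2'`. -/
theorem IsWeakMorphism.ev_skewCorrection_comp (hf : IsWeakMorphism k A B f1 f2 f21 f3)
    (hf' : IsWeakMorphism k B C f1' f2' f21' f3') (x y z : L 0) :
    ev 2 (skewCorrection A C (cmp1 f1' f1) (cmp2 f1' f2' f1 f2) (cmp21 f1' f21' f1 f21))
        (triple x y z) =
      ev 2 (fc3 2 (skewCorrection B C f1' f2' f21') f1 f1 f1) (triple x y z) +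
        ev 2 (fc1 2 f1' (skewCorrection A B f1 f2 f21)) (triple x y z) +
        (ev 2 (fc2 2 f2' f2 f1) (triple x y z) + ev 2 (fc2 2 f2' f2 f1) (triple y z x)) +
        (ev 2 (fc2 2 f2' f1 f2) (triple x y z) + ev 2 (fc2 2 f2' f1 f2) (triple z x y)) := by
  rw [ev_fc3_triple, ev_fc1_of_degree_zero]
  simp only [ev_skewCorrection, ev_cmp1, ev_cmp2, ev_cmp21, hf.ev_f1_l2, ev_fc2_triple_left,
    ev_fc2_triple_right]
  simp only [← hf'.lin1.linearMap_apply, ← hf'.lin21.bilinearMap_apply,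
    ← C.lin21.bilinearMap_apply, map_add, map_sub, LinearMap.add_apply]
  simp only [hf'.lin1.linearMap_apply, hf'.lin21.bilinearMap_apply, C.lin21.bilinearMap_apply,
    hf'.ev_f21_D_left, hf'.ev_f21_D_right]
  abel

theorem IsWeakMorphism.altEv_skewCorrection_comp (hf : IsWeakMorphism k A B f1 f2 f21 f3)
    (hf' : IsWeakMorphism k B C f1' f2' f21' f3') (x y z : L 0) :
    altEv (skewCorrection A C (cmp1 f1' f1) (cmp2 f1' f2' f1 f2) (cmp21 f1' f21' f1 f21)) x y z =
      altEv (skewCorrection B C f1' f2' f21') (ev 0 f1 (single x)) (ev 0 f1 (single y))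
          (ev 0 f1 (single z)) +
        ev 2 f1' (single (altEv (skewCorrection A B f1 f2 f21) x y z)) +
        (2 : ℤ) • altEv (fc2 2 f2' f2 f1) x y z + (2 : ℤ) • altEv (fc2 2 f2' f1 f2) x y z := by
  rw [← altEv_fc3, ← altEv_fc1 hf'.lin1]
  simp only [altEv, hf.ev_skewCorrection_comp hf']
  abel

end SkewCorrection

section SkewSymmetrization

variable {k : Type} [CommRing k] [Invertible (2 : k)] {L M N : ℤ → Type}
  [∀ i, AddCommGroup (M i)] [∀ i, Module k (M i)] {i j t : ℤ}

theorem ev_skewMor2 (g : MMap L M 2 1) (x : L i) (y : L j) {ht : 1 + ∑ a, ![i, j] a = t} :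
    ev t (skewMor2 k g) (pair x y) ht =
      ⅟(2 : k) • (ev t g (pair x y) ht -
        (-1 : ℤ) ^ (i * j).natAbs • ev t g (pair y x) (by rw [← ht]; simp [add_comm])) := by
  rw [skewMor2, ev_smul, ev_sum_sign_pa_pair]

variable [∀ i, AddCommGroup (N i)] [∀ i, Module k (N i)]

theorem skewMor2_cmp2 {f1' : MMap M N 1 0} (hf1' : IsMultilinear k f1') (f2' : MMap M N 2 1)
    (f1 : MMap L M 1 0) (f2 : MMap L M 2 1) :
    skewMor2 k (cmp2 f1' f2' f1 f2) =
      cmp2 f1' (skewMor2 k f2') f1 (skewMor2 k f2) := by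
  refine ext_pair fun x y ht => ?_
  rw [ev_skewMor2, ev_cmp2, ev_cmp2, ev_cmp2, ev_skewMor2, ev_skewMor2]
  simp only [← hf1'.linearMap_apply, map_smul, map_sub, map_zsmul]
  module

theorem ev_fc2_skewMor2_left {f2' : MMap M N 2 1} (hf2' : IsMultilinear k f2')
    (f1 : MMap L M 1 0) (f2 : MMap L M 2 1) (x y z : L 0) :
    ev 2 (fc2 2 (skewMor2 k f2') (skewMor2 k f2) f1) (triple x y z) =
      (⅟(2 : k) * ⅟(2 : k)) •
        (ev 2 (fc2 2 f2' f2 f1) (triple x y z) - ev 2 (fc2 2 f2' f2 f1) (triple y x z) -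
          ev 2 (fc2 2 f2' f1 f2) (triple z x y) + ev 2 (fc2 2 f2' f1 f2) (triple z y x)) := by
  simp only [ev_fc2_triple_left, ev_fc2_triple_right, ev_skewMor2, mul_zero, Int.natAbs_zero,
    pow_zero, one_zsmul, ← hf2'.bilinearMap_apply, map_smul, map_sub, LinearMap.smul_apply,
    LinearMap.sub_apply]
  module

theorem ev_fc2_skewMor2_right {f2' : MMap M N 2 1} (hf2' : IsMultilinear k f2')
    (f1 : MMap L M 1 0) (f2 : MMap L M 2 1) (x y z : L 0) :
    ev 2 (fc2 2 (skewMor2 k f2') f1 (skewMor2 k f2)) (triple x y z) =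
      (⅟(2 : k) * ⅟(2 : k)) •
        (ev 2 (fc2 2 f2' f1 f2) (triple x y z) - ev 2 (fc2 2 f2' f1 f2) (triple x z y) -
          ev 2 (fc2 2 f2' f2 f1) (triple y z x) + ev 2 (fc2 2 f2' f2 f1) (triple z y x)) := by
  simp only [ev_fc2_triple_left, ev_fc2_triple_right, ev_skewMor2, zero_mul, mul_zero,
    Int.natAbs_zero, pow_zero, one_zsmul, ← hf2'.bilinearMap_apply, map_smul, map_sub,
    LinearMap.smul_apply, LinearMap.sub_apply]
  module

theorem ev_cmp3_skewMor2 {f2' : MMap M N 2 1} (hf2' : IsMultilinear k f2') (f1' : MMap M N 1 0)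
    (g3' : MMap M N 3 2) (f1 : MMap L M 1 0) (f2 : MMap L M 2 1) (g3 : MMap L M 3 2)
    (x y z : L 0) :
    ev 2 (cmp3 f1' (skewMor2 k f2') g3' f1 (skewMor2 k f2) g3) (triple x y z) =
      ev 2 g3' (triple (ev 0 f1 (single x)) (ev 0 f1 (single y)) (ev 0 f1 (single z))) +
        (⅟(2 : k) * ⅟(2 : k)) •
          (altEv (fc2 2 f2' f1 f2) x y z - altEv (fc2 2 f2' f2 f1) x y z) +
        ev 2 f1' (single (ev 2 g3 (triple x y z))) := by
  simp only [ev_cmp3, ev_fc2_skewMor2_left hf2', ev_fc2_skewMor2_right hf2', altEv]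
  module

end SkewSymmetrization

section Stability

variable {L M N : ℤ → Type} [∀ i, AddCommGroup (L i)] [∀ i, AddCommGroup (M i)]
  [∀ i, AddCommGroup (N i)] {f1 : MMap L M 1 0} {f2 : MMap L M 2 1} {f21 : MMap L M 2 2}
  {f3 : MMap L M 3 2} {f1' : MMap M N 1 0} {f2' : MMap M N 2 1} {f21' : MMap M N 2 2}
  {f3' : MMap M N 3 2}

theorem PreservesZero.cmp1 (hf1' : PreservesZero f1') (hf1 : PreservesZero f1) :
    PreservesZero (cmp1 f1' f1) :=
  hf1'.fc1 hf1 _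

theorem PreservesZero.cmp2 (hf1' : PreservesZero f1') (hf2' : PreservesZero f2')
    (hf1 : PreservesZero f1) (hf2 : PreservesZero f2) : PreservesZero (cmp2 f1' f2' f1 f2) :=
  (hf2'.fc2 hf1 hf1 _).add (hf1'.fc1 hf2 _)

theorem PreservesZero.cmp21 (hf1' : PreservesZero f1') (hf21' : PreservesZero f21')
    (hf1 : PreservesZero f1) (hf21 : PreservesZero f21) : PreservesZero (cmp21 f1' f21' f1 f21) :=
  (hf21'.fc2 hf1 hf1 _).add (hf1'.fc1 hf21 _)

theorem PreservesZero.cmp3 (hf1' : PreservesZero f1') (hf2' : PreservesZero f2')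
    (hf3' : PreservesZero f3') (hf1 : PreservesZero f1) (hf2 : PreservesZero f2)
    (hf3 : PreservesZero f3) : PreservesZero (cmp3 f1' f2' f3' f1 f2 f3) :=
  ((((hf3'.fc3 hf1 hf1 hf1 _).sub (hf2'.fc2 hf2 hf1 _)).add (hf2'.fc2 hf1 hf2 _)).sub
    ((hf2'.fc2 hf1 hf2 _).pa _)).add (hf1'.fc1 hf3 _)

theorem PreservesZero.skewMor2 {k : Type} [CommRing k] [Invertible (2 : k)]
    [∀ i, Module k (M i)] (hf2 : PreservesZero f2) : PreservesZero (skewMor2 k f2) :=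
  hf2.sum_sign_pa.smul _

end Stability

section SkewMor3

variable {k : Type} [CommRing k] [Invertible (2 : k)] [Invertible (3 : k)] {L M N : ℤ → Type}
  [∀ i, AddCommGroup (L i)] [∀ i, AddCommGroup (M i)] [∀ i, AddCommGroup (N i)]
  [∀ i, Module k (L i)] [∀ i, Module k (M i)] [∀ i, Module k (N i)] {A : WeakLie3 k L}
  {B : WeakLie3 k M} {C : WeakLie3 k N} {f1 : MMap L M 1 0} {f2 : MMap L M 2 1}
  {f21 : MMap L M 2 2} {f3 : MMap L M 3 2} {f1' : MMap M N 1 0} {f2' : MMap M N 2 1}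
  {f21' : MMap M N 2 2} {f3' : MMap M N 3 2}

theorem ev_skewMor3 (A : WeakLie3 k L) (B : WeakLie3 k M) (f1 : MMap L M 1 0) (f2 : MMap L M 2 1)
    (f21 : MMap L M 2 2) (f3 : MMap L M 3 2) (x y z : L 0) :
    ev 2 (skewMor3 k A B f1 f2 f21 f3) (triple x y z) =
      (⅟(2 : k) * ⅟(3 : k)) • altEv f3 x y z -
        (⅟(2 : k) * ⅟(2 : k) * ⅟(2 : k) * ⅟(3 : k)) •
          altEv (skewCorrection A B f1 f2 f21) x y z := by
  rw [skewMor3, ev_sub, ev_smul, ev_smul, ev_sum_sign_pa_triple, ev_sum_sign_pa_triple,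
    skewCorrection]

theorem IsWeakMorphism.ev_skewMor3_comp (hf : IsWeakMorphism k A B f1 f2 f21 f3)
    (hf' : IsWeakMorphism k B C f1' f2' f21' f3') (x y z : L 0) :
    ev 2 (skewMor3 k A C (cmp1 f1' f1) (cmp2 f1' f2' f1 f2) (cmp21 f1' f21' f1 f21)
        (cmp3 f1' f2' f3' f1 f2 f3)) (triple x y z) =
      ev 2 (cmp3 f1' (skewMor2 k f2') (skewMor3 k B C f1' f2' f21' f3') f1 (skewMor2 k f2)
        (skewMor3 k A B f1 f2 f21 f3)) (triple x y z) := by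
  have quarter : ⅟(2 : k) * ⅟(2 : k) = 6 * (⅟(2 : k) * ⅟(2 : k) * ⅟(2 : k) * ⅟(3 : k)) := by
    linear_combination (norm := ring_nf)
      (-2 * ⅟(2 : k) ^ 3) * mul_invOf_self (3 : k) - ⅟(2 : k) ^ 2 * mul_invOf_self (2 : k)
  have sixth : ⅟(2 : k) * ⅟(3 : k) = 4 * (⅟(2 : k) * ⅟(2 : k) * ⅟(2 : k) * ⅟(3 : k)) := by
    linear_combination (norm := ring_nf)
      (-2 * ⅟(2 : k) ^ 2 * ⅟(3 : k) - ⅟(2 : k) * ⅟(3 : k)) * mul_invOf_self (2 : k)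
  rw [ev_cmp3_skewMor2 hf'.lin2, ev_skewMor3, ev_skewMor3, ev_skewMor3, altEv_cmp3 hf'.lin1,
    hf.altEv_skewCorrection_comp hf', ← hf'.lin1.linearMap_apply, ← hf'.lin1.linearMap_apply,
    ← hf'.lin1.linearMap_apply, map_sub, map_smul, map_smul]
  generalize ⅟(2 : k) * ⅟(2 : k) * ⅟(2 : k) * ⅟(3 : k) = c at quarter sixth ⊢
  rw [quarter, sixth]
  module

theorem PreservesZero.skewMor3 (A : WeakLie3 k L) (B : WeakLie3 k M) (hf1 : PreservesZero f1)
    (hf2 : PreservesZero f2) (hf21 : PreservesZero f21) (hf3 : PreservesZero f3) :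
    PreservesZero (skewMor3 k A B f1 f2 f21 f3) :=
  have hl2 := A.leib.lin2.preservesZero
  have hl21 := B.lin21.preservesZero
  have correction : PreservesZero (skewCorrection A B f1 f2 f21) :=
    ((((hf21.pc (m₁ := 0) (m₂ := 1) hl2 _).add (hf21.pc (m₁ := 1) (m₂ := 0) hl2 _)).sub
      (hl21.fc2 hf2 hf1 _)).sub (hl21.fc2 hf1 hf2 _))
  (hf3.sum_sign_pa.smul _).sub (correction.sum_sign_pa.smul _)

theorem IsWeakMorphism.skewMor3_comp (hf : IsWeakMorphism k A B f1 f2 f21 f3)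
    (hf' : IsWeakMorphism k B C f1' f2' f21' f3') :
    skewMor3 k A C (cmp1 f1' f1) (cmp2 f1' f2' f1 f2) (cmp21 f1' f21' f1 f21)
        (cmp3 f1' f2' f3' f1 f2 f3) =
      cmp3 f1' (skewMor2 k f2') (skewMor3 k B C f1' f2' f21' f3') f1 (skewMor2 k f2)
        (skewMor3 k A B f1 f2 f21 f3) := by
  have h1 := hf.lin1.preservesZero
  have h2 := hf.lin2.preservesZero
  have h21 := hf.lin21.preservesZero
  have h3 := hf.lin3.preservesZero
  have h1' := hf'.lin1.preservesZero
  have h2' := hf'.lin2.preservesZero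
  have h21' := hf'.lin21.preservesZero
  have h3' := hf'.lin3.preservesZero
  exact PreservesZero.ext_triple (n := 2)
    (.skewMor3 A C (h1'.cmp1 h1) (h1'.cmp2 h2' h1 h2) (h1'.cmp21 h21' h1 h21)
      (h1'.cmp3 h2' h3' h1 h2 h3))
    (h1'.cmp3 h2'.skewMor2 (.skewMor3 B C h1' h2' h21' h3') h1 h2.skewMor2
      (.skewMor3 A B h1 h2 h21 h3))
    (fun i hi => A.bound i (.inl hi)) (fun i hi => C.bound i (.inr hi)) le_rfl
    (hf.ev_skewMor3_comp hf')

end SkewMor3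

/-- **Skew-symmetrization is functorial up to homotopy**: for weak morphisms
`f : (L,d,λ) → (L',d',λ')` and `f' : (L',d',λ') → (L'',d'',λ'')` of weak Lie 3-algebras
over `k` with `2, 3` invertible, the skew-symmetrized components of the composite `f'∘f`
satisfy: (i) the first component equals `f̄1'∘f̄1`; (ii) the second component equals
`f̄2'∘(f̄1,f̄1) + f̄1'∘f̄2`; (iii) the third component differs from
`f̄3'∘(f̄1,f̄1,f̄1) - f̄2'∘(f̄2,f̄1) + f̄2'∘(f̄1,f̄2) - f̄2'∘(f̄1,f̄2)^{(12)} + f̄1'∘f̄3`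
by the boundary `∂(-(1/24)·Σ_σ sgn σ·(f21'∘(f2,f1) + f21'∘(f1,f2))^σ)`. -/
theorem skew_symmetrization_functorial_up_to_homotopy
    (k : Type) [CommRing k] [Invertible (2 : k)] [Invertible (3 : k)]
    {L M N : ℤ → Type} [∀ i, AddCommGroup (L i)] [∀ i, Module k (L i)]
    [∀ i, AddCommGroup (M i)] [∀ i, Module k (M i)]
    [∀ i, AddCommGroup (N i)] [∀ i, Module k (N i)]
    (A : WeakLie3 k L) (B : WeakLie3 k M) (C : WeakLie3 k N)
    (f1 : MMap L M 1 0) (f2 : MMap L M 2 1) (f21 : MMap L M 2 2) (f3 : MMap L M 3 2)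
    (hf : IsWeakMorphism k A B f1 f2 f21 f3)
    (f1' : MMap M N 1 0) (f2' : MMap M N 2 1) (f21' : MMap M N 2 2) (f3' : MMap M N 3 2)
    (hf' : IsWeakMorphism k B C f1' f2' f21' f3') :
    cmp1 f1' f1 = fc1 0 f1' f1 ∧
    skewMor2 k (cmp2 f1' f2' f1 f2)
      = fc2 1 (skewMor2 k f2') f1 f1 + fc1 1 f1' (skewMor2 k f2) ∧
    skewMor3 k A C (cmp1 f1' f1) (cmp2 f1' f2' f1 f2) (cmp21 f1' f21' f1 f21)
        (cmp3 f1' f2' f3' f1 f2 f3)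
      - (fc3 2 (skewMor3 k B C f1' f2' f21' f3') f1 f1 f1
          - fc2 2 (skewMor2 k f2') (skewMor2 k f2) f1
          + fc2 2 (skewMor2 k f2') f1 (skewMor2 k f2)
          - pa (P12 3) (fc2 2 (skewMor2 k f2') f1 (skewMor2 k f2))
          + fc1 2 f1' (skewMor3 k A B f1 f2 f21 f3))
      = bd 2 C.D A.D
          (- (⅟ (2 : k) * ⅟ (2 : k) * ⅟ (2 : k) * ⅟ (3 : k)) •
            ∑ σ : Equiv.Perm (Fin 3), (Equiv.Perm.sign σ : ℤ) •
              pa σ (fc2 3 f21' f2 f1 + fc2 3 f21' f1 f2)) := by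
  refine ⟨rfl, skewMor2_cmp2 hf'.lin1 f2' f1 f2, ?_⟩
  have h1 := hf.lin1.preservesZero
  have h2 := hf.lin2.preservesZero
  have h21' := hf'.lin21.preservesZero
  have homotopy_eq_zero : -(⅟(2 : k) * ⅟(2 : k) * ⅟(2 : k) * ⅟(3 : k)) •
      ∑ σ : Equiv.Perm (Fin 3), (Equiv.Perm.sign σ : ℤ) •
        pa σ (fc2 3 f21' f2 f1 + fc2 3 f21' f1 f2) = 0 :=
    (((h21'.fc2 h2 h1 _).add (h21'.fc2 h1 h2 _)).sum_sign_pa.smul _).eq_zero_of_lt (n := 2)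
      (fun i hi => A.bound i (.inl hi)) (fun i hi => C.bound i (.inr hi)) (by decide)
  rw [homotopy_eq_zero, bd_zero C.linD.preservesZero, sub_eq_zero]
  exact hf.skewMor3_comp hf'

end WL3
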